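/- arXiv:2602.05357 — 2 statements merged into one kernel-verified Lean document; each statement's English description precedes it below -/
import Mathlib

section
/- Let θ : ℝⁿ → [−∞,+∞] be symmetric, let the spectral function g = θ∘λ be lower semicontinuous, let X ∈ Sⁿ and Y ∈ ∂g(X), and let U ∈ Oⁿ(X) and y ∈ ∂θ(λ(X)) satisfy Y = U·Diag(y)·Uᵀ; let v = Qy for a block-diagonal permutation matrix Q (blocks indexed by α₁,…,α_r) chosen so that each block v_{α_m} has nonincreasing entries. Assume that either (a) g is subdifferentially regular at X, or (b) θ is locally Lipschitz continuous at λ(X) relative to its domain and Y ∈ ∂̂g(X). Then H ∈ C_g(X,Y) if and only if λ'(X;H) ∈ C_θ(λ(X),v) and, for every m = 1,…,r, the matrices Diag(y_{α_m}) and U_{α_m}ᵀ·H·U_{α_m} have a simultaneous ordered spectral decomposition. -/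
open Filter Topology Matrix

noncomputable section

namespace SpecPaper

/-! ## Generic variational analysis definitions over a topological real vector space -/

variable {E : Type*}

section Generic

variable [AddCommGroup E] [Module ℝ E] [TopologicalSpace E]

/-- `f x` is finite (neither `+∞` nor `-∞`). -/
def IsFiniteAt (f : E → EReal) (x : E) : Prop :=
  f x ≠ ⊤ ∧ f x ≠ ⊥

/-- The norm induced by a given inner product. -/
noncomputable def nrm (ip : E → E → ℝ) (x : E) : ℝ :=
  Real.sqrt (ip x x)

/-- The subderivative `df(x)(w)`. -/
noncomputable def subderiv (f : E → EReal) (x w : E) : EReal :=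
  Filter.liminf (fun p : ℝ × E => (((p.1)⁻¹ : ℝ) : EReal) * (f (x + p.1 • p.2) - f x))
    ((nhdsWithin (0 : ℝ) (Set.Ioi 0)) ×ˢ nhds w)

/-- The second-order difference quotient `Δ²ₜ f(x,v)(w)`. -/
noncomputable def sdq2 (ip : E → E → ℝ) (f : E → EReal) (x v : E) (t : ℝ) (w : E) : EReal :=
  (((2 / t ^ 2) : ℝ) : EReal) * (f (x + t • w) - f x - ((t * ip v w : ℝ) : EReal))

/-- The second subderivative `d²f(x,v)(w)`. -/
noncomputable def subderiv2 (ip : E → E → ℝ) (f : E → EReal) (x v w : E) : EReal :=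
  Filter.liminf (fun p : ℝ × E => sdq2 ip f x v p.1 p.2)
    ((nhdsWithin (0 : ℝ) (Set.Ioi 0)) ×ˢ nhds w)

/-- Twice epi-differentiability of `f` at `x` for `v`. -/
def TwiceEpiDiff (ip : E → E → ℝ) (f : E → EReal) (x v : E) : Prop :=
  IsFiniteAt f x ∧
    ∀ t : ℕ → ℝ, (∀ k, 0 < t k) → Tendsto t atTop (nhds 0) →
      ∀ w : E, ∃ ws : ℕ → E, Tendsto ws atTop (nhds w) ∧
        Tendsto (fun k => sdq2 ip f x v (t k) (ws k)) atTop (nhds (subderiv2 ip f x v w))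

/-- `v` is a regular subgradient of `f` at `x`. -/
def RegSubgrad (ip : E → E → ℝ) (f : E → EReal) (x v : E) : Prop :=
  IsFiniteAt f x ∧
    (0 : EReal) ≤ Filter.liminf
      (fun y : E =>
        (((nrm ip (y - x))⁻¹ : ℝ) : EReal) * (f y - f x - ((ip v (y - x) : ℝ) : EReal)))
      (nhdsWithin x {x}ᶜ)

/-- `v` is a (limiting) subgradient of `f` at `x`. -/
def LimSubgrad (ip : E → E → ℝ) (f : E → EReal) (x v : E) : Prop :=
  ∃ xs vs : ℕ → E, (∀ k, RegSubgrad ip f (xs k) (vs k)) ∧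
    Tendsto xs atTop (nhds x) ∧ Tendsto vs atTop (nhds v) ∧
    Tendsto (fun k => f (xs k)) atTop (nhds (f x))

/-- The tangent cone to `C` at `x`. -/
def tangentCone (C : Set E) (x : E) : Set E :=
  {w | ∃ (t : ℕ → ℝ) (ws : ℕ → E), (∀ k, 0 < t k) ∧ Tendsto t atTop (nhds 0) ∧
    Tendsto ws atTop (nhds w) ∧ ∀ k, x + t k • ws k ∈ C}

/-- The regular normal cone to `C` at `x`. -/
def regNormalCone (ip : E → E → ℝ) (C : Set E) (x : E) : Set E :=
  {v | ∀ w ∈ tangentCone C x, ip v w ≤ 0}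

/-- The limiting normal cone to `C` at `x`. -/
def limNormalCone (ip : E → E → ℝ) (C : Set E) (x : E) : Set E :=
  {v | ∃ xs vs : ℕ → E, (∀ k, xs k ∈ C) ∧ (∀ k, vs k ∈ regNormalCone ip C (xs k)) ∧
    Tendsto xs atTop (nhds x) ∧ Tendsto vs atTop (nhds v)}

/-- The critical cone `C_f(x,v)`. -/
def criticalCone (ip : E → E → ℝ) (f : E → EReal) (x v : E) : Set E :=
  {w | subderiv f x w = ((ip v w : ℝ) : EReal)}

/-- `f` is locally Lipschitz continuous at `x` relative to its domain. -/
def LocLipAtRelDom (ip : E → E → ℝ) (f : E → EReal) (x : E) : Prop :=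
  IsFiniteAt f x ∧
    ∃ V ∈ nhds x, ∃ ℓ : ℝ, 0 ≤ ℓ ∧
      ∀ a ∈ V, ∀ b ∈ V, f a ≠ ⊤ → f b ≠ ⊤ →
        f a ≠ ⊥ ∧ f b ≠ ⊥ ∧ |(f a).toReal - (f b).toReal| ≤ ℓ * nrm ip (a - b)

/-- `f` is locally Lipschitz continuous relative to its domain. -/
def LocLipRelDom (ip : E → E → ℝ) (f : E → EReal) : Prop :=
  ∀ x : E, f x ≠ ⊤ → LocLipAtRelDom ip f x

/-- `v` is a proximal subgradient of `f` at `x`. -/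
def ProxSubgrad (ip : E → E → ℝ) (f : E → EReal) (x v : E) : Prop :=
  IsFiniteAt f x ∧
    ∃ r > (0 : ℝ), ∃ ε > (0 : ℝ), ∀ x' : E, nrm ip (x' - x) ≤ ε →
      f x + ((ip v (x' - x) - r / 2 * ip (x' - x) (x' - x) : ℝ) : EReal) ≤ f x'

/-- `f` is prox-regular at `x` for `v`. -/
def ProxRegularAtFor (ip : E → E → ℝ) (f : E → EReal) (x v : E) : Prop :=
  IsFiniteAt f x ∧
    (∃ δ > (0 : ℝ), LowerSemicontinuousOn f {x' | nrm ip (x' - x) < δ}) ∧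
    ∃ ε > (0 : ℝ), ∃ r : ℝ, 0 ≤ r ∧
      ∀ x₁ v₁ : E, LimSubgrad ip f x₁ v₁ → nrm ip (x₁ - x) < ε → nrm ip (v₁ - v) < ε →
        f x₁ < f x + (ε : EReal) →
        ∀ x' : E, nrm ip (x' - x) < ε →
          f x₁ + ((ip v₁ (x' - x₁) - r / 2 * ip (x' - x₁) (x' - x₁) : ℝ) : EReal) ≤ f x'

/-- `f` is prox-regular at `x` (for every subgradient). -/
def ProxRegularAt (ip : E → E → ℝ) (f : E → EReal) (x : E) : Prop :=
  ∀ v : E, LimSubgrad ip f x v → ProxRegularAtFor ip f x v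

/-- `f` is subdifferentially continuous at `x`. -/
def SubdiffContAt (ip : E → E → ℝ) (f : E → EReal) (x : E) : Prop :=
  ∀ v : E, LimSubgrad ip f x v →
    ∀ xs vs : ℕ → E, (∀ k, LimSubgrad ip f (xs k) (vs k)) →
      Tendsto xs atTop (nhds x) → Tendsto vs atTop (nhds v) →
      Tendsto (fun k => f (xs k)) atTop (nhds (f x))

/-- `f` is prox-bounded. -/
def ProxBounded (ip : E → E → ℝ) (f : E → EReal) : Prop :=
  ∃ α c : ℝ, ∀ x : E, (c : EReal) ≤ f x + ((α * ip x x : ℝ) : EReal)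

/-- The proximal mapping (as a set of minimizers). -/
def proxSet (ip : E → E → ℝ) (f : E → EReal) (γ : ℝ) (x : E) : Set E :=
  {w | ∀ w' : E,
    f w + ((1 / (2 * γ) * ip (w - x) (w - x) : ℝ) : EReal) ≤
      f w' + ((1 / (2 * γ) * ip (w' - x) (w' - x) : ℝ) : EReal)}

/-- The proximal map of `f` with parameter `γ` is single-valued around `z` and the resulting
map is directionally differentiable at `z`. -/
def ProxSingleDirDiff (ip : E → E → ℝ) (f : E → EReal) (γ : ℝ) (z : E) : Prop :=
  ∃ V ∈ nhds z, ∃ P : E → E, (∀ u ∈ V, proxSet ip f γ u = {P u}) ∧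
    ∀ h : E, ∃ L : E,
      Tendsto (fun t : ℝ => t⁻¹ • (P (z + t • h) - P z)) (nhdsWithin 0 (Set.Ioi 0)) (nhds L)

/-- The parabolic difference quotient. -/
noncomputable def parabQuot (f : E → EReal) (x w : E) (t : ℝ) (z : E) : EReal :=
  (((2 / t ^ 2) : ℝ) : EReal) *
    (f (x + t • w + (t ^ 2 / 2) • z) - f x - ((t * (subderiv f x w).toReal : ℝ) : EReal))

/-- The parabolic subderivative `d²f(x)(w | z)`. -/
noncomputable def parabSubderiv (f : E → EReal) (x w z : E) : EReal :=
  Filter.liminf (fun p : ℝ × E => parabQuot f x w p.1 p.2)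
    ((nhdsWithin (0 : ℝ) (Set.Ioi 0)) ×ˢ nhds z)

/-- `f` is parabolically epi-differentiable at `x` for `w`. -/
def ParabEpiDiff (f : E → EReal) (x w : E) : Prop :=
  (∃ z : E, parabSubderiv f x w z < ⊤) ∧
    ∀ t : ℕ → ℝ, (∀ k, 0 < t k) → Tendsto t atTop (nhds 0) →
      ∀ z : E, ∃ zs : ℕ → E, Tendsto zs atTop (nhds z) ∧
        Tendsto (fun k => parabQuot f x w (t k) (zs k)) atTop (nhds (parabSubderiv f x w z))

/-- `φ` is a generalized quadratic form: its domain is a linear subspace and on the domain it is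
given by a symmetric linear operator. -/
def IsGQF (ip : E → E → ℝ) (φ : E → EReal) : Prop :=
  (φ 0 ≠ ⊤) ∧
  (∀ x y : E, φ x ≠ ⊤ → φ y ≠ ⊤ → φ (x + y) ≠ ⊤) ∧
  (∀ (c : ℝ) (x : E), φ x ≠ ⊤ → φ (c • x) ≠ ⊤) ∧
  ∃ L : E → E,
    (∀ x y : E, φ x ≠ ⊤ → φ y ≠ ⊤ → L (x + y) = L x + L y) ∧
    (∀ (c : ℝ) (x : E), φ x ≠ ⊤ → L (c • x) = c • L x) ∧
    (∀ x y : E, φ x ≠ ⊤ → φ y ≠ ⊤ → ip (L x) y = ip x (L y)) ∧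
    (∀ x : E, φ x ≠ ⊤ → φ x = ((ip (L x) x : ℝ) : EReal))

/-- `f` is generalized twice differentiable at `x` for `v`. -/
def GenTwiceDiff (ip : E → E → ℝ) (f : E → EReal) (x v : E) : Prop :=
  TwiceEpiDiff ip f x v ∧ IsGQF ip (subderiv2 ip f x v)

/-- Proto-differentiability of a set-valued map `F` at `x` for `y ∈ F x`. -/
def ProtoDiff (F : E → Set E) (x y : E) : Prop :=
  ∀ w η : E, (w, η) ∈ tangentCone {p : E × E | p.2 ∈ F p.1} (x, y) →
    ∀ t : ℕ → ℝ, (∀ k, 0 < t k) → Tendsto t atTop (nhds 0) →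
      ∃ ws ηs : ℕ → E, Tendsto ws atTop (nhds w) ∧ Tendsto ηs atTop (nhds η) ∧
        ∀ k, y + t k • ηs k ∈ F (x + t k • ws k)

/-- Relative interior of a set (interior relative to its affine hull). -/
def relInterior (C : Set E) : Set E :=
  {y | y ∈ C ∧ ∃ V ∈ nhds y, ∀ z ∈ V, z ∈ affineSpan ℝ C → z ∈ C}

/-- A polyhedral set: the intersection of finitely many closed half-spaces. -/
def IsPolyhedral (ip : E → E → ℝ) (C : Set E) : Prop :=
  ∃ (k : ℕ) (a : Fin k → E) (b : Fin k → ℝ), C = {x | ∀ j : Fin k, ip (a j) x ≤ b j}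

/-- The subdifferential of a convex function. -/
def convexSubdiff (ip : E → E → ℝ) (f : E → EReal) (x : E) : Set E :=
  {v | ∀ z : E, f x + ((ip v (z - x) : ℝ) : EReal) ≤ f z}

/-- The natural inner product on `E × ℝ`. -/
def ipProd (ip : E → E → ℝ) : E × ℝ → E × ℝ → ℝ :=
  fun p q => ip p.1 q.1 + p.2 * q.2

/-- The epigraph of `f`. -/
def epiSet (f : E → EReal) : Set (E × ℝ) :=
  {p | f p.1 ≤ (p.2 : EReal)}

/-- `f` is subdifferentially regular at `x`. -/
def SubdiffRegularAt (ip : E → E → ℝ) (f : E → EReal) (x : E) : Prop :=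
  IsFiniteAt f x ∧
    regNormalCone (ipProd ip) (epiSet f) (x, (f x).toReal) =
      limNormalCone (ipProd ip) (epiSet f) (x, (f x).toReal)

/-! Real-valued versions: semidifferentiability, gradients. -/

/-- `f` is semidifferentiable at `x`. -/
def SemiDiffAt (f : E → ℝ) (x : E) : Prop :=
  ∀ w : E, ∃ d : ℝ,
    Tendsto (fun p : ℝ × E => (p.1)⁻¹ * (f (x + p.1 • p.2) - f x))
      ((nhdsWithin (0 : ℝ) (Set.Ioi 0)) ×ˢ nhds w) (nhds d)

/-- The (real value of the) subderivative of a real-valued function. -/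
noncomputable def dReal (f : E → ℝ) (x w : E) : ℝ :=
  (subderiv (fun y => ((f y : ℝ) : EReal)) x w).toReal

/-- The second-order difference quotient built from the subderivative. -/
noncomputable def sdq2R (f : E → ℝ) (x : E) (t : ℝ) (w : E) : ℝ :=
  (2 / t ^ 2) * (f (x + t • w) - f x - t * dReal f x w)

/-- `f` is twice semidifferentiable at `x`. -/
def TwiceSemiDiffAt (f : E → ℝ) (x : E) : Prop :=
  SemiDiffAt f x ∧
    ∀ w : E, ∃ d : ℝ,
      Tendsto (fun p : ℝ × E => sdq2R f x p.1 p.2)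
        ((nhdsWithin (0 : ℝ) (Set.Ioi 0)) ×ˢ nhds w) (nhds d)

/-- The second semiderivative `d²f(x)(w)` (the liminf; it is the full limit whenever `f` is
twice semidifferentiable at `x`). -/
noncomputable def secondSemiDeriv (f : E → ℝ) (x w : E) : EReal :=
  Filter.liminf (fun p : ℝ × E => ((sdq2R f x p.1 p.2 : ℝ) : EReal))
    ((nhdsWithin (0 : ℝ) (Set.Ioi 0)) ×ˢ nhds w)

/-- `f` is (Fréchet) differentiable at `x` with gradient `g` (w.r.t. inner product `ip`). -/
def HasGradAt (ip : E → E → ℝ) (f : E → ℝ) (x g : E) : Prop :=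
  Tendsto (fun y : E => (nrm ip (y - x))⁻¹ * (f y - f x - ip g (y - x)))
    (nhdsWithin x {x}ᶜ) (nhds 0)

/-- `f` is locally Lipschitz continuous around `x`. -/
def LocLipAt (ip : E → E → ℝ) (f : E → ℝ) (x : E) : Prop :=
  ∃ V ∈ nhds x, ∃ ℓ : ℝ, 0 ≤ ℓ ∧ ∀ a ∈ V, ∀ b ∈ V, |f a - f b| ≤ ℓ * nrm ip (a - b)

/-- `f` is twice differentiable at `x` with gradient map `G` near `x` and second derivative
(the derivative of `G` at `x`) given by the linear map `Dxx`. -/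
def HasSecondDerivAt (ip : E → E → ℝ) (f : E → EReal) (x : E) (G : E → E) (Dxx : E → E) :
    Prop :=
  ∃ V ∈ nhds x, ∃ fr : E → ℝ,
    (∀ z ∈ V, f z = ((fr z : ℝ) : EReal)) ∧
    (∀ z ∈ V, HasGradAt ip fr z (G z)) ∧
    IsLinearMap ℝ Dxx ∧
    Tendsto (fun z : E => (nrm ip (z - x))⁻¹ • (G z - G x - Dxx (z - x)))
      (nhdsWithin x {x}ᶜ) (nhds 0)

/-- `f` is twice differentiable at `x`. -/
def TwiceDiffAt (ip : E → E → ℝ) (f : E → EReal) (x : E) : Prop :=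
  ∃ G Dxx : E → E, HasSecondDerivAt ip f x G Dxx

end Generic

/-! ## Eigenvalues and spectral machinery -/

open scoped Classical in
/-- The eigenvalues of a real symmetric matrix, arranged in nonincreasing order
(junk value `0` if the matrix is not symmetric). -/
noncomputable def eigval {n : ℕ} (X : Matrix (Fin n) (Fin n) ℝ) : Fin n → ℝ :=
  if h : X.IsHermitian then
    fun i => h.eigenvalues (Tuple.sort (fun j => -h.eigenvalues j) i)
  else 0

/-- `Oⁿ(X)`: orthogonal matrices realizing the ordered spectral decomposition of `X`. -/
def eigOrth {n : ℕ} (X : Matrix (Fin n) (Fin n) ℝ) : Set (Matrix (Fin n) (Fin n) ℝ) :=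
  {U | U * Uᵀ = 1 ∧ X = U * Matrix.diagonal (eigval X) * Uᵀ}

open scoped Classical in
/-- The block `α_m` of indices `j` whose eigenvalue `λ_j(X)` equals `λ_i(X)`. -/
noncomputable def blockSet {n : ℕ} (X : Matrix (Fin n) (Fin n) ℝ) (i : Fin n) :
    Finset (Fin n) :=
  Finset.univ.filter fun j => eigval X j = eigval X i

lemma mem_blockSet_self {n : ℕ} (X : Matrix (Fin n) (Fin n) ℝ) (i : Fin n) :
    i ∈ blockSet X i := by
  simp [blockSet]

/-- The increasing enumeration of the block of `i`. -/
noncomputable def blockEmb {n : ℕ} (X : Matrix (Fin n) (Fin n) ℝ) (i : Fin n) :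
    Fin (blockSet X i).card → Fin n :=
  fun a => ((blockSet X i).orderIsoOfFin rfl a : Fin n)

/-- The position of `i` inside its own block. -/
noncomputable def blockIdx {n : ℕ} (X : Matrix (Fin n) (Fin n) ℝ) (i : Fin n) :
    Fin (blockSet X i).card :=
  ((blockSet X i).orderIsoOfFin rfl).symm ⟨i, mem_blockSet_self X i⟩

/-- The principal submatrix of `M` corresponding to the block of `i` (for `X`). -/
noncomputable def blockMat {n : ℕ} (X M : Matrix (Fin n) (Fin n) ℝ) (i : Fin n) :
    Matrix (Fin (blockSet X i).card) (Fin (blockSet X i).card) ℝ :=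
  Matrix.of fun a b => M (blockEmb X i a) (blockEmb X i b)

/-- The directional derivative `λ'(X;H)` of the ordered eigenvalue map, computed through
`U ∈ Oⁿ(X)`: blockwise ordered eigenvalues of `U_{α_m}ᵀ H U_{α_m}`. -/
noncomputable def lambdaDir {n : ℕ} (X U H : Matrix (Fin n) (Fin n) ℝ) : Fin n → ℝ :=
  fun i => eigval (blockMat X (Uᵀ * H * U) i) (blockIdx X i)

open scoped Classical in
/-- The Moore–Penrose pseudoinverse of a square real matrix, characterized by the four
Penrose equations. -/
noncomputable def pinv {n : ℕ} (A : Matrix (Fin n) (Fin n) ℝ) :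
    Matrix (Fin n) (Fin n) ℝ :=
  if h : ∃ B : Matrix (Fin n) (Fin n) ℝ,
      A * B * A = A ∧ B * A * B = B ∧ (A * B)ᵀ = A * B ∧ (B * A)ᵀ = B * A
  then h.choose else 0

/-- The curvature term `2 ∑ₘ ⟨Diag(y)_{αₘαₘ}, U_{αₘ}ᵀ H (μₘ I - X)† H U_{αₘ}⟩`, written as a
single sum over all indices. -/
noncomputable def curvTerm {n : ℕ} (X U H : Matrix (Fin n) (Fin n) ℝ) (y : Fin n → ℝ) : ℝ :=
  2 * ∑ i : Fin n, y i *
    (Uᵀ * (H * pinv (eigval X i • (1 : Matrix (Fin n) (Fin n) ℝ) - X) * H) * U) i i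

/-- Two symmetric matrices admit a simultaneous ordered spectral decomposition. -/
def simOrdSpec {k : ℕ} (A B : Matrix (Fin k) (Fin k) ℝ) : Prop :=
  ∃ P : Matrix (Fin k) (Fin k) ℝ, P * Pᵀ = 1 ∧
    A = P * Matrix.diagonal (eigval A) * Pᵀ ∧
    B = P * Matrix.diagonal (eigval B) * Pᵀ

/-- The subspace of symmetric `n × n` real matrices. -/
def symSubmodule (n : ℕ) : Submodule ℝ (Matrix (Fin n) (Fin n) ℝ) where
  carrier := {A | A.IsSymm}
  add_mem' := by
    intro a b ha hb
    simp only [Set.mem_setOf_eq, Matrix.IsSymm] at *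
    rw [Matrix.transpose_add, ha, hb]
  zero_mem' := by
    simp only [Set.mem_setOf_eq, Matrix.IsSymm, Matrix.transpose_zero]
  smul_mem' := by
    intro c a ha
    simp only [Set.mem_setOf_eq, Matrix.IsSymm] at *
    rw [Matrix.transpose_smul, ha]

/-- The space `Sⁿ` of symmetric `n × n` real matrices. -/
abbrev Sym (n : ℕ) : Type := ↥(symSubmodule n)

/-- The trace inner product `⟨A, B⟩ = tr(AB)` on `Sⁿ`. -/
noncomputable def ipM {n : ℕ} (A B : Sym n) : ℝ :=
  ((A : Matrix (Fin n) (Fin n) ℝ) * (B : Matrix (Fin n) (Fin n) ℝ)).trace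

/-- The Euclidean inner product on `ℝⁿ`. -/
def ipV {n : ℕ} (v w : Fin n → ℝ) : ℝ :=
  ∑ i, v i * w i

/-- The spectral function `g = θ ∘ λ` on `Sⁿ`. -/
noncomputable def specFn {n : ℕ} (θ : (Fin n → ℝ) → EReal) : Sym n → EReal :=
  fun A => θ (eigval (A : Matrix (Fin n) (Fin n) ℝ))

/-- A function on `ℝⁿ` is symmetric (permutation invariant). -/
def SymmetricFn {n : ℕ} {α : Type*} (θ : (Fin n → ℝ) → α) : Prop :=
  ∀ (x : Fin n → ℝ) (σ : Equiv.Perm (Fin n)), θ (fun i => x (σ i)) = θ x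

/-- The diagonal matrix `Diag(w)` as an element of `Sⁿ`. -/
noncomputable def diagSym {n : ℕ} (w : Fin n → ℝ) : Sym n :=
  ⟨Matrix.diagonal w, Matrix.isSymm_diagonal w⟩

/-- The `i`-th order statistic: `orderStat x i` is the `i`-th largest entry of `x`. -/
noncomputable def orderStat {n : ℕ} (x : Fin n → ℝ) : Fin n → ℝ :=
  fun i => x (Tuple.sort (fun j => -x j) i)



/-! ## Helper lemmas: spectral decompositions -/

lemma orth_comm {n : ℕ} {P : Matrix (Fin n) (Fin n) ℝ} (h : P * Pᵀ = 1) : Pᵀ * P = 1 :=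
  mul_eq_one_comm.mp h

lemma perm_of_multiset {n : ℕ} {f g : Fin n → ℝ}
    (h : Multiset.map f Finset.univ.val = Multiset.map g Finset.univ.val) :
    ∃ τ : Equiv.Perm (Fin n), f = g ∘ τ := by
  have h1 : (List.ofFn f).Perm (List.ofFn g) := by
    rw [Fin.univ_val_map, Fin.univ_val_map] at h
    exact Multiset.coe_eq_coe.mp h
  have h2 : f ∘ Tuple.sort f = g ∘ Tuple.sort g := by
    apply List.ofFn_injective
    have p := (((Tuple.sort f).ofFn_comp_perm f).trans h1).trans
      ((Tuple.sort g).ofFn_comp_perm g).symm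
    exact p.eq_of_pairwise' (Tuple.monotone_sort f).sortedLE_ofFn.pairwise
      (Tuple.monotone_sort g).sortedLE_ofFn.pairwise
  refine ⟨(Tuple.sort f).symm.trans (Tuple.sort g), ?_⟩
  funext i
  have := congrFun h2 ((Tuple.sort f).symm i)
  simpa using this

lemma eigval_eq {n : ℕ} {A : Matrix (Fin n) (Fin n) ℝ} (h : A.IsHermitian) :
    ∃ τ : Equiv.Perm (Fin n), eigval A = h.eigenvalues ∘ τ ∧ Antitone (eigval A) := by
  refine ⟨Tuple.sort (fun j => -h.eigenvalues j), ?_, ?_⟩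
  · unfold eigval
    rw [dif_pos h]; rfl
  · unfold eigval
    rw [dif_pos h]
    intro i j hij
    have := Tuple.monotone_sort (fun j => -h.eigenvalues j) hij
    simp only [Function.comp] at this
    linarith

lemma isHermitian_conj {n : ℕ} (P : Matrix (Fin n) (Fin n) ℝ) (w : Fin n → ℝ) :
    (P * Matrix.diagonal w * Pᵀ).IsHermitian := by
  unfold Matrix.IsHermitian
  rw [Matrix.conjTranspose_eq_transpose_of_trivial]
  simp [Matrix.transpose_mul, Matrix.mul_assoc]

lemma eigval_conj_perm {n : ℕ} {P : Matrix (Fin n) (Fin n) ℝ} (hP : P * Pᵀ = 1)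
    (w : Fin n → ℝ) :
    ∃ τ : Equiv.Perm (Fin n), eigval (P * Matrix.diagonal w * Pᵀ) = w ∘ τ := by
  have h := isHermitian_conj P w
  obtain ⟨τ, h1, -⟩ := eigval_eq h
  have hc : (P * Matrix.diagonal w * Pᵀ).charpoly = (Matrix.diagonal w).charpoly := by
    rw [Matrix.charpoly_mul_comm, ← mul_assoc, orth_comm hP, one_mul]
  have hr := h.roots_charpoly_eq_eigenvalues
  rw [hc, Matrix.charpoly_diagonal, Polynomial.roots_prod] at hr
  · simp only [Polynomial.roots_X_sub_C, Multiset.bind_singleton] at hr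
    obtain ⟨ρ, hρ⟩ := perm_of_multiset hr.symm
    refine ⟨τ.trans ρ, ?_⟩
    rw [h1]
    funext i
    have := congrFun hρ (τ i)
    simpa using this
  · simp [Finset.prod_ne_zero_iff, Polynomial.X_sub_C_ne_zero]

lemma eigval_antitone_conj {n : ℕ} (P : Matrix (Fin n) (Fin n) ℝ)
    (w : Fin n → ℝ) : Antitone (eigval (P * Matrix.diagonal w * Pᵀ)) :=
  (eigval_eq (isHermitian_conj P w)).choose_spec.2

lemma antitone_perm_eq {n : ℕ} {z w : Fin n → ℝ} (hz : Antitone z) (hw : Antitone w)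
    {τ : Equiv.Perm (Fin n)} (h : w = z ∘ τ) : w = z := by
  subst h
  have := Tuple.unique_antitone (f := z) (σ := τ) (τ := 1) hw (by simpa using hz)
  simpa using this

lemma eigval_unique {n : ℕ} {P A : Matrix (Fin n) (Fin n) ℝ} (hP : P * Pᵀ = 1)
    {z : Fin n → ℝ} (hz : Antitone z) (hA : A = P * Matrix.diagonal z * Pᵀ) : eigval A = z := by
  subst hA
  obtain ⟨τ, h⟩ := eigval_conj_perm hP z
  exact antitone_perm_eq hz (eigval_antitone_conj P z) h

lemma isHermitian_of_isSymm {n : ℕ} {A : Matrix (Fin n) (Fin n) ℝ} (h : A.IsSymm) :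
    A.IsHermitian := by
  unfold Matrix.IsHermitian
  rw [Matrix.conjTranspose_eq_transpose_of_trivial]; exact h

lemma conj_perm_mat {n : ℕ} (P : Matrix (Fin n) (Fin n) ℝ) (w : Fin n → ℝ)
    (τ : Equiv.Perm (Fin n)) :
    (P.submatrix id τ) * Matrix.diagonal (w ∘ τ) * (P.submatrix id τ)ᵀ =
      P * Matrix.diagonal w * Pᵀ := by
  ext i j
  rw [Matrix.mul_apply, Matrix.mul_apply]
  simp only [Matrix.mul_diagonal, Matrix.submatrix_apply, id,
    Matrix.transpose_apply, Function.comp]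
  exact Equiv.sum_comp τ (fun k => P i k * w k * P j k)

lemma orth_perm_mat {n : ℕ} {P : Matrix (Fin n) (Fin n) ℝ} (hP : P * Pᵀ = 1)
    (τ : Equiv.Perm (Fin n)) :
    (P.submatrix id τ) * (P.submatrix id τ)ᵀ = 1 := by
  rw [← hP]
  ext i j
  simp only [Matrix.mul_apply, Matrix.submatrix_apply, id, Matrix.transpose_apply]
  exact Equiv.sum_comp τ (fun k => P i k * P j k)

lemma exists_eigOrth {n : ℕ} {A : Matrix (Fin n) (Fin n) ℝ} (hs : A.IsSymm) :
    ∃ P : Matrix (Fin n) (Fin n) ℝ, P * Pᵀ = 1 ∧ A = P * Matrix.diagonal (eigval A) * Pᵀ := by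
  have h := isHermitian_of_isSymm hs
  obtain ⟨τ, h1, -⟩ := eigval_eq h
  let Q : Matrix (Fin n) (Fin n) ℝ := h.eigenvectorUnitary
  have hQ : Q * Qᵀ = 1 := by
    have := (Matrix.mem_unitaryGroup_iff (A := Q)).mp h.eigenvectorUnitary.2
    rwa [Matrix.star_eq_conjTranspose, Matrix.conjTranspose_eq_transpose_of_trivial] at this
  have hA : A = Q * Matrix.diagonal h.eigenvalues * Qᵀ := by
    have := h.spectral_theorem
    rw [Unitary.conjStarAlgAut_apply, Matrix.star_eq_conjTranspose,
      Matrix.conjTranspose_eq_transpose_of_trivial] at this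
    exact this
  refine ⟨Q.submatrix id τ, orth_perm_mat hQ τ, ?_⟩
  rw [h1, conj_perm_mat]
  exact hA

lemma eigval_antitone {n : ℕ} {A : Matrix (Fin n) (Fin n) ℝ} (hs : A.IsSymm) :
    Antitone (eigval A) :=
  (eigval_eq (isHermitian_of_isSymm hs)).choose_spec.2

/-! ## Fan's inequality and its equality case -/

lemma trace_conj_conj {n : ℕ} (P Q : Matrix (Fin n) (Fin n) ℝ) (a b : Fin n → ℝ) :
    ((P * Matrix.diagonal a * Pᵀ) * (Q * Matrix.diagonal b * Qᵀ)).trace =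
      ∑ i, ∑ j, a i * b j * ((Pᵀ * Q) i j) ^ 2 := by
  have h1 : ((P * Matrix.diagonal a * Pᵀ) * (Q * Matrix.diagonal b * Qᵀ)).trace =
      ((Matrix.diagonal a * (Pᵀ * Q)) * (Matrix.diagonal b * (Pᵀ * Q)ᵀ)).trace := by
    rw [Matrix.transpose_mul, Matrix.transpose_transpose]
    rw [Matrix.mul_assoc P, Matrix.mul_assoc P, Matrix.trace_mul_comm]
    simp only [Matrix.mul_assoc]
  rw [h1]
  simp only [Matrix.trace, Matrix.diag, Matrix.mul_apply (M := Matrix.diagonal a * (Pᵀ * Q))]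
  refine Finset.sum_congr rfl fun i _ => Finset.sum_congr rfl fun j _ => ?_
  rw [Matrix.diagonal_mul, Matrix.diagonal_mul, Matrix.transpose_apply]
  ring

lemma fan_ineq_aux {n : ℕ} {P Q : Matrix (Fin n) (Fin n) ℝ} (hP : P * Pᵀ = 1)
    (hQ : Q * Qᵀ = 1) {a b : Fin n → ℝ} (ha : Antitone a) (hb : Antitone b) :
    ((P * Matrix.diagonal a * Pᵀ) * (Q * Matrix.diagonal b * Qᵀ)).trace ≤ ∑ i, a i * b i := by
  rw [trace_conj_conj]
  set W := Pᵀ * Q with hW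
  have hW1 : W * Wᵀ = 1 := by
    rw [hW, Matrix.transpose_mul, Matrix.transpose_transpose, Matrix.mul_assoc,
      ← Matrix.mul_assoc Q, hQ, Matrix.one_mul, orth_comm hP]
  have hW2 := orth_comm hW1
  let S : Matrix (Fin n) (Fin n) ℝ := Matrix.of fun i j => (W i j) ^ 2
  have hS : S ∈ doublyStochastic ℝ (Fin n) := by
    rw [mem_doublyStochastic_iff_sum]
    refine ⟨fun i j => sq_nonneg _, fun i => ?_, fun j => ?_⟩
    · have := congrFun (congrFun hW1 i) i
      rw [Matrix.mul_apply, Matrix.one_apply_eq] at this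
      rw [← this]
      exact Finset.sum_congr rfl fun j _ => by simp [S, sq]
    · have := congrFun (congrFun hW2 j) j
      rw [Matrix.mul_apply, Matrix.one_apply_eq] at this
      rw [← this]
      exact Finset.sum_congr rfl fun j _ => by simp [S, sq]
  obtain ⟨w, hw0, hw1, hwS⟩ := exists_eq_sum_perm_of_mem_doublyStochastic hS
  have key : ∀ i j, (W i j) ^ 2 = ∑ σ : Equiv.Perm (Fin n), w σ * (if σ i = j then 1 else 0) := by
    intro i j
    have := congrFun (congrFun hwS i) j
    rw [Matrix.sum_apply] at this
    rw [show (W i j) ^ 2 = S i j from rfl, ← this]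
    refine Finset.sum_congr rfl fun σ _ => ?_
    rw [Matrix.smul_apply, smul_eq_mul, Equiv.Perm.permMatrix, Equiv.toPEquiv,
      PEquiv.toMatrix_apply]
    simp [eq_comm]
  have h1 : ∑ i, ∑ j, a i * b j * (W i j) ^ 2 =
      ∑ σ : Equiv.Perm (Fin n), w σ * ∑ i, a i * b (σ i) := by
    simp_rw [key, Finset.mul_sum]
    rw [Finset.sum_congr rfl fun i _ => Finset.sum_comm, Finset.sum_comm]
    refine Finset.sum_congr rfl fun σ _ => Finset.sum_congr rfl fun i _ => ?_
    rw [Finset.sum_eq_single (σ i)]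
    · simp; ring
    · intro j _ hj
      simp [Ne.symm hj]
    · simp
  rw [h1]
  have hm : Monovary a b := by
    intro i j hij
    have : j ≤ i := by
      by_contra hc
      exact absurd (hb (le_of_not_ge hc)) (not_le.mpr hij)
    exact ha this
  calc ∑ σ : Equiv.Perm (Fin n), w σ * ∑ i, a i * b (σ i)
      ≤ ∑ σ : Equiv.Perm (Fin n), w σ * ∑ i, a i * b i :=
        Finset.sum_le_sum fun σ _ =>
          mul_le_mul_of_nonneg_left hm.sum_mul_comp_perm_le_sum_mul (hw0 σ)
    _ = ∑ i, a i * b i := by rw [← Finset.sum_mul, hw1, one_mul]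

lemma fan_ineq {n : ℕ} {A B : Matrix (Fin n) (Fin n) ℝ} (hA : A.IsSymm) (hB : B.IsSymm) :
    (A * B).trace ≤ ∑ i, eigval A i * eigval B i := by
  obtain ⟨P, hP, hAP⟩ := exists_eigOrth hA
  obtain ⟨Q, hQ, hBQ⟩ := exists_eigOrth hB
  have := fan_ineq_aux hP hQ (eigval_antitone hA) (eigval_antitone hB)
  rwa [← hAP, ← hBQ] at this

lemma trace_same {n : ℕ} {P : Matrix (Fin n) (Fin n) ℝ} (hP : P * Pᵀ = 1) (a b : Fin n → ℝ) :
    ((P * Matrix.diagonal a * Pᵀ) * (P * Matrix.diagonal b * Pᵀ)).trace = ∑ i, a i * b i := by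
  rw [trace_conj_conj, orth_comm hP]
  refine Finset.sum_congr rfl fun i _ => ?_
  rw [Finset.sum_eq_single i]
  · simp
  · intro j _ hj
    simp [Ne.symm hj]
  · simp

lemma trace_self_sum {n : ℕ} {A : Matrix (Fin n) (Fin n) ℝ} (hA : A.IsSymm) :
    (A * A).trace = ∑ i, ∑ j, A i j ^ 2 := by
  simp only [Matrix.trace, Matrix.diag, Matrix.mul_apply]
  refine Finset.sum_congr rfl fun i _ => Finset.sum_congr rfl fun j _ => ?_
  rw [hA.apply i j]; ring

lemma eq_zero_of_trace_self {n : ℕ} {A : Matrix (Fin n) (Fin n) ℝ} (hA : A.IsSymm)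
    (h : (A * A).trace ≤ 0) : A = 0 := by
  rw [trace_self_sum hA] at h
  ext i j
  have h1 := (Finset.sum_eq_zero_iff_of_nonneg (fun i _ =>
    Finset.sum_nonneg fun j _ => sq_nonneg (A i j))).mp
    (le_antisymm h (Finset.sum_nonneg fun i _ => Finset.sum_nonneg fun j _ => sq_nonneg (A i j)))
    i (Finset.mem_univ i)
  have h2 := (Finset.sum_eq_zero_iff_of_nonneg (fun j _ => sq_nonneg (A i j))).mp h1 j
    (Finset.mem_univ j)
  simpa using h2

lemma isSymm_conj {n : ℕ} (P : Matrix (Fin n) (Fin n) ℝ) (w : Fin n → ℝ) :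
    (P * Matrix.diagonal w * Pᵀ).IsSymm := by
  unfold Matrix.IsSymm
  simp [Matrix.transpose_mul, Matrix.mul_assoc]

lemma fan_eq_of_sim {k : ℕ} {A B : Matrix (Fin k) (Fin k) ℝ} (h : simOrdSpec A B) :
    (A * B).trace = ∑ i, eigval A i * eigval B i := by
  obtain ⟨P, hP, hA, hB⟩ := h
  have := trace_same hP (eigval A) (eigval B)
  rwa [← hA, ← hB] at this

lemma sim_of_fan_eq {k : ℕ} {A B : Matrix (Fin k) (Fin k) ℝ} (hA : A.IsSymm) (hB : B.IsSymm)
    (h : (A * B).trace = ∑ i, eigval A i * eigval B i) : simOrdSpec A B := by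
  have hC : (A + B).IsSymm := hA.add hB
  obtain ⟨P, hP, hCP⟩ := exists_eigOrth hC
  set a := eigval A with ha
  set b := eigval B with hb
  set c := eigval (A + B) with hc
  have trsq : ∀ {M : Matrix (Fin k) (Fin k) ℝ}, M.IsSymm →
      (M * M).trace = ∑ i, eigval M i * eigval M i := by
    intro M hM
    obtain ⟨Q, hQ, hMQ⟩ := exists_eigOrth hM
    have := trace_same hQ (eigval M) (eigval M)
    rwa [← hMQ] at this
  have e1 : ∑ i, c i * c i = ∑ i, (a i + b i) * (a i + b i) := by
    rw [← trsq hC, add_mul, mul_add, mul_add, Matrix.trace_add, Matrix.trace_add, Matrix.trace_add,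
      trsq hA, trsq hB, Matrix.trace_mul_comm B A, h, ← Finset.sum_add_distrib,
      ← Finset.sum_add_distrib, ← Finset.sum_add_distrib]
    exact Finset.sum_congr rfl fun i _ => by ring
  have e2 : ∑ i, c i * c i ≤ ∑ i, (a i + b i) * c i := by
    have h1 := fan_ineq hA hC
    have h2 := fan_ineq hB hC
    rw [← trsq hC, add_mul, Matrix.trace_add]
    simp only [add_mul (a _), Finset.sum_add_distrib]
    exact add_le_add h1 h2
  have e3 : ∑ i, (a i + b i - c i) ^ 2 = 0 := by
    apply le_antisymm _ (Finset.sum_nonneg fun i _ => sq_nonneg _)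
    have : ∑ i, (a i + b i - c i) ^ 2 = ∑ i, (a i + b i) * (a i + b i)
        - 2 * ∑ i, (a i + b i) * c i + ∑ i, c i * c i := by
      rw [Finset.mul_sum, ← Finset.sum_sub_distrib, ← Finset.sum_add_distrib]
      exact Finset.sum_congr rfl fun i _ => by ring
    rw [this]; linarith
  have e4 : c = fun i => a i + b i := by
    funext i
    have := (Finset.sum_eq_zero_iff_of_nonneg (fun i _ => sq_nonneg _)).mp e3 i (Finset.mem_univ i)
    have := pow_eq_zero_iff (two_ne_zero) |>.mp this
    linarith
  set A1 := P * Matrix.diagonal a * Pᵀ with hA1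
  set B1 := P * Matrix.diagonal b * Pᵀ with hB1
  have hsum : A + B = A1 + B1 := by
    rw [hCP, e4, hA1, hB1, ← Matrix.add_mul, ← Matrix.mul_add, Matrix.diagonal_add]
  have hA1s : A1.IsSymm := isSymm_conj P a
  have hB1s : B1.IsSymm := isSymm_conj P b
  have hea : eigval A1 = a := eigval_unique hP (eigval_antitone hA) hA1
  have heb : eigval B1 = b := eigval_unique hP (eigval_antitone hB) hB1
  have f1 := fan_ineq hA hA1s
  have f2 := fan_ineq hA hB1s
  rw [hea] at f1
  rw [heb] at f2
  have f3 : (A * A1).trace + (A * B1).trace = ∑ i, a i * a i + ∑ i, a i * b i := by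
    rw [← Matrix.trace_add, ← mul_add, ← hsum, mul_add, Matrix.trace_add, h, trsq hA]
  have f4 : A - A1 = 0 := by
    apply eq_zero_of_trace_self (hA.sub hA1s)
    have g1 := trsq hA
    have g2 := trsq hA1s
    rw [hea] at g2
    rw [sub_mul, mul_sub, mul_sub, Matrix.trace_sub, Matrix.trace_sub, Matrix.trace_sub,
      Matrix.trace_mul_comm A1 A]
    linarith
  have hAA : A = A1 := sub_eq_zero.mp f4
  have hBB : B = B1 := by
    rw [← hAA] at hsum
    exact add_left_cancel hsum
  exact ⟨P, hP, hAA, hBB⟩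


/-! ## Directional differentiability of the ordered eigenvalues -/

lemma orth_entry_bound {n : ℕ} {W : Matrix (Fin n) (Fin n) ℝ} (hW : W * Wᵀ = 1) (i j : Fin n) :
    W i j ∈ Set.Icc (-1 : ℝ) 1 := by
  have h := congrFun (congrFun hW i) i
  rw [Matrix.mul_apply, Matrix.one_apply_eq] at h
  have h2 : W i j ^ 2 ≤ 1 := by
    rw [← h]
    have := Finset.single_le_sum (f := fun k => W i k * Wᵀ k i)
      (fun k _ => by simpa using mul_self_nonneg (W i k)) (Finset.mem_univ j)
    simpa [sq] using this
  exact ⟨by nlinarith, by nlinarith⟩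

lemma tendsto_mat_mul {n : ℕ} {ι : Type*} {l : Filter ι} {M N : ι → Matrix (Fin n) (Fin n) ℝ}
    {M0 N0 : Matrix (Fin n) (Fin n) ℝ} (hM : Tendsto M l (𝓝 M0)) (hN : Tendsto N l (𝓝 N0)) :
    Tendsto (fun p => M p * N p) l (𝓝 (M0 * N0)) := by
  have hc : Continuous fun q : Matrix (Fin n) (Fin n) ℝ × Matrix (Fin n) (Fin n) ℝ =>
    q.1 * q.2 := by fun_prop
  exact (hc.tendsto (M0, N0)).comp (hM.prodMk_nhds hN)

lemma tendsto_mat_transpose {n : ℕ} {ι : Type*} {l : Filter ι}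
    {M : ι → Matrix (Fin n) (Fin n) ℝ}
    {M0 : Matrix (Fin n) (Fin n) ℝ} (hM : Tendsto M l (𝓝 M0)) :
    Tendsto (fun p => (M p)ᵀ) l (𝓝 M0ᵀ) := by
  have hc : Continuous fun q : Matrix (Fin n) (Fin n) ℝ => qᵀ := by fun_prop
  exact (hc.tendsto M0).comp hM

lemma ultra_orth {n : ℕ} {ι : Type*} (l : Ultrafilter ι) (W : ι → Matrix (Fin n) (Fin n) ℝ)
    (hW : ∀ᶠ p in l, W p * (W p)ᵀ = 1) :
    ∃ W0 : Matrix (Fin n) (Fin n) ℝ, W0 * W0ᵀ = 1 ∧ Tendsto W l (𝓝 W0) := by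
  have hK : IsCompact ((Set.pi Set.univ fun _ : Fin n => Set.pi Set.univ fun _ : Fin n =>
      Set.Icc (-1 : ℝ) 1) : Set (Matrix (Fin n) (Fin n) ℝ)) :=
    isCompact_univ_pi fun _ => isCompact_univ_pi fun _ => isCompact_Icc
  obtain ⟨(W0 : Matrix (Fin n) (Fin n) ℝ), -, h0⟩ := hK.ultrafilter_le_nhds (l.map W) (by
    rw [le_principal_iff]
    show ∀ᶠ p in l, W p ∈ _
    filter_upwards [hW] with p hp
    exact fun i _ j _ => orth_entry_bound hp i j)
  have ht : Tendsto W l (𝓝 W0) := h0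
  refine ⟨W0, ?_, ht⟩
  have h1 : Tendsto (fun p => W p * (W p)ᵀ) l (𝓝 (W0 * W0ᵀ)) := by
    have hc : Continuous fun M : Matrix (Fin n) (Fin n) ℝ => M * Mᵀ := by fun_prop
    exact (hc.tendsto W0).comp ht
  exact tendsto_nhds_unique (h1.congr' hW) tendsto_const_nhds

set_option maxHeartbeats 400000 in
lemma eig_dir_core {n : ℕ} {ι : Type*} (l : Ultrafilter ι) {t : ι → ℝ}
    {K W : ι → Matrix (Fin n) (Fin n) ℝ} {L : ι → Fin n → ℝ} {d : Fin n → ℝ}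
    {K0 : Matrix (Fin n) (Fin n) ℝ}
    (ht : Tendsto t l (𝓝 0)) (htp : ∀ᶠ p in l, 0 < t p) (hK : Tendsto K l (𝓝 K0))
    (hW : ∀ p, W p * (W p)ᵀ = 1) (hd : Antitone d) (hL : ∀ p, Antitone (L p))
    (hdec : ∀ p, Matrix.diagonal d + t p • K p = W p * Matrix.diagonal (L p) * (W p)ᵀ) :
    ∃ (W0 : Matrix (Fin n) (Fin n) ℝ) (z : Fin n → ℝ), W0 * W0ᵀ = 1 ∧
      (∀ i, Tendsto (fun p => (t p)⁻¹ * (L p i - d i)) l (𝓝 (z i))) ∧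
      (∀ i j, d i ≠ d j → W0 i j = 0) ∧
      (∀ i j, d i = d j → (W0ᵀ * K0 * W0) i j = if i = j then z i else 0) ∧
      (∀ i j, i ≤ j → d i = d j → z j ≤ z i) := by
  obtain ⟨W0, hW0, hWt⟩ := ultra_orth l W (Eventually.of_forall hW)
  have hW' := fun p => orth_comm (hW p)
  -- entrywise convergence
  have ent : ∀ {M : ι → Matrix (Fin n) (Fin n) ℝ} {M0 : Matrix (Fin n) (Fin n) ℝ},
      Tendsto M l (𝓝 M0) → ∀ i j, Tendsto (fun p => M p i j) l (𝓝 (M0 i j)) := by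
    intro M M0 h i j
    exact tendsto_pi_nhds.mp (tendsto_pi_nhds.mp h i) j
  have hL1 : ∀ p, (W p)ᵀ * (Matrix.diagonal d + t p • K p) * W p = Matrix.diagonal (L p) := by
    intro p
    rw [hdec, Matrix.mul_assoc, Matrix.mul_assoc, hW', Matrix.mul_one, ← Matrix.mul_assoc, hW',
      Matrix.one_mul]
  have hM : Tendsto (fun p => Matrix.diagonal (L p)) l (𝓝 (W0ᵀ * Matrix.diagonal d * W0)) := by
    have hc : Continuous fun q : Matrix (Fin n) (Fin n) ℝ × ℝ × Matrix (Fin n) (Fin n) ℝ =>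
        q.1ᵀ * (Matrix.diagonal d + q.2.1 • q.2.2) * q.1 := by fun_prop
    have := (hc.tendsto (W0, 0, K0)).comp (hWt.prodMk_nhds (ht.prodMk_nhds hK))
    simp only [zero_smul, add_zero] at this
    refine this.congr fun p => hL1 p
  set m : Fin n → ℝ := fun i => (W0ᵀ * Matrix.diagonal d * W0) i i with hm
  have hLm : ∀ i, Tendsto (fun p => L p i) l (𝓝 (m i)) := by
    intro i
    simpa using ent hM i i
  have hMd : W0ᵀ * Matrix.diagonal d * W0 = Matrix.diagonal m := by
    ext i j
    by_cases hij : i = j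
    · subst hij; simp [hm]
    · rw [Matrix.diagonal_apply_ne _ hij]
      refine tendsto_nhds_unique (ent hM i j) ?_
      simp only [Matrix.diagonal_apply_ne _ hij]
      exact tendsto_const_nhds
  have hmanti : Antitone m := fun i j hij =>
    le_of_tendsto_of_tendsto' (hLm j) (hLm i) fun p => hL p hij
  have hmd : m = d := by
    have e1 : eigval (Matrix.diagonal d) = m := by
      refine eigval_unique hW0 hmanti ?_
      rw [← hMd]
      rw [Matrix.mul_assoc, Matrix.mul_assoc, Matrix.mul_assoc, hW0, Matrix.mul_one,
        ← Matrix.mul_assoc, hW0, Matrix.one_mul]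
    have e2 : eigval (Matrix.diagonal d) = d :=
      eigval_unique (P := 1) (by simp) hd (by simp)
    rw [← e1, e2]
  rw [hmd] at hLm hMd
  have hW0z : ∀ i j, d i ≠ d j → W0 i j = 0 := by
    intro i j hij
    have h1 : Matrix.diagonal d * W0 = W0 * Matrix.diagonal d := by
      have h0 : W0 * (W0ᵀ * Matrix.diagonal d * W0) = Matrix.diagonal d * W0 := by
        rw [← Matrix.mul_assoc, ← Matrix.mul_assoc, hW0, Matrix.one_mul]
      rw [hMd] at h0
      exact h0.symm
    have h2 := congrFun (congrFun h1 i) j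
    rw [Matrix.diagonal_mul, Matrix.mul_diagonal] at h2
    have h3 : (d i - d j) * W0 i j = 0 := by linarith
    exact (mul_eq_zero.mp h3).resolve_left (sub_ne_zero.mpr hij)
  -- off-block columns are of order `t`
  have hoff : ∀ k i, d k ≠ d i →
      Tendsto (fun p => (t p)⁻¹ * W p k i) l (𝓝 ((K0 * W0) k i / (d i - d k))) := by
    intro k i hki
    have hKW : Tendsto (fun p => K p * W p) l (𝓝 (K0 * W0)) := by
      exact tendsto_mat_mul hK hWt
    have h1 : Tendsto (fun p => (K p * W p) k i / (L p i - d k)) l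
        (𝓝 ((K0 * W0) k i / (d i - d k))) :=
      (ent hKW k i).div ((hLm i).sub tendsto_const_nhds) (sub_ne_zero.mpr (Ne.symm hki))
    refine h1.congr' ?_
    have hne : ∀ᶠ p in (l : Filter ι), L p i ≠ d k :=
      (hLm i).eventually_ne (Ne.symm hki)
    filter_upwards [hne, htp] with p hp htp'
    have h2 : (Matrix.diagonal d + t p • K p) * W p = W p * Matrix.diagonal (L p) := by
      rw [hdec, Matrix.mul_assoc, hW', Matrix.mul_one]
    have h3 := congrFun (congrFun h2 k) i
    rw [Matrix.add_mul, Matrix.add_apply, Matrix.diagonal_mul, Matrix.smul_mul, Matrix.smul_apply,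
      Matrix.mul_diagonal, smul_eq_mul] at h3
    have h4 : L p i - d k ≠ 0 := sub_ne_zero.mpr hp
    have h5 : t p ≠ 0 := htp'.ne'
    field_simp
    linarith
  -- the key expansion
  have hkey : ∀ i j, d i = d j →
      Tendsto (fun p => (t p)⁻¹ * ((L p i - d i) * if i = j then 1 else 0)) l
        (𝓝 ((W0ᵀ * K0 * W0) i j)) := by
    intro i j hij
    have hA : Tendsto (fun p => ∑ k, (d k - d i) * ((t p)⁻¹ * W p k i) * W p k j) l (𝓝 0) := by
      rw [show (0 : ℝ) = ∑ k : Fin n, (0 : ℝ) by simp]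
      refine tendsto_finsetSum _ fun k _ => ?_
      by_cases hk : d k = d i
      · simp [hk]
      · have := (((hoff k i hk).const_mul (d k - d i)).mul (ent hWt k j))
        rwa [hW0z k j (fun h => hk (h.trans hij.symm)), mul_zero] at this
    have hB : Tendsto (fun p => (W p)ᵀ * K p * W p) l (𝓝 (W0ᵀ * K0 * W0)) := by
      exact tendsto_mat_mul (tendsto_mat_mul (tendsto_mat_transpose hWt) hK) hWt
    have hAB := hA.add (ent hB i j)
    rw [zero_add] at hAB
    refine hAB.congr' ?_
    filter_upwards [htp] with p hp
    have h1 := congrFun (congrFun (hL1 p) i) j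
    have h2 := congrFun (congrFun (hW' p) i) j
    rw [Matrix.mul_add, Matrix.add_mul, Matrix.add_apply, Matrix.mul_smul, Matrix.smul_mul,
      Matrix.smul_apply, smul_eq_mul, Matrix.mul_apply] at h1
    simp only [Matrix.mul_diagonal, Matrix.transpose_apply] at h1
    rw [Matrix.mul_apply, Matrix.one_apply] at h2
    simp only [Matrix.transpose_apply] at h2
    rw [Matrix.diagonal_apply] at h1
    have h3 : ∑ k, (d k - d i) * ((t p)⁻¹ * W p k i) * W p k j =
        (t p)⁻¹ * (∑ k, W p k i * d k * W p k j - d i * ∑ k, W p k i * W p k j) := by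
      rw [Finset.mul_sum, ← Finset.sum_sub_distrib, Finset.mul_sum]
      exact Finset.sum_congr rfl fun k _ => by ring
    rw [h3, h2]
    have h5 : t p ≠ 0 := hp.ne'
    have h6 : ∑ k, W p k i * d k * W p k j =
        (if i = j then L p i else 0) - t p * ((W p)ᵀ * K p * W p) i j := by linarith
    rw [h6]
    generalize ((W p)ᵀ * K p * W p) i j = c
    split_ifs
    · field_simp
      ring
    · field_simp
      ring
  refine ⟨W0, fun i => (W0ᵀ * K0 * W0) i i, hW0, ?_, hW0z, ?_, ?_⟩
  · intro i
    simpa using hkey i i rfl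
  · intro i j hij
    by_cases h : i = j
    · subst h; simp
    · rw [if_neg h]
      have := hkey i j hij
      simp only [if_neg h, mul_zero] at this
      exact tendsto_nhds_unique this tendsto_const_nhds
  · intro i j hle hij
    have h1 := hkey i i rfl
    have h2 := hkey j j rfl
    simp only [if_true, mul_one] at h1 h2
    refine le_of_tendsto_of_tendsto h2 h1 ?_
    filter_upwards [htp] with p hp
    have := hL p hle
    rw [hij]
    exact mul_le_mul_of_nonneg_left (by linarith) (inv_nonneg.mpr hp.le)

lemma sum_blockEmb {n : ℕ} (X : Matrix (Fin n) (Fin n) ℝ) (i : Fin n) (f : Fin n → ℝ) :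
    ∑ a, f (blockEmb X i a) = ∑ j ∈ blockSet X i, f j := by
  rw [← Finset.sum_coe_sort (blockSet X i) f]
  exact Equiv.sum_comp ((blockSet X i).orderIsoOfFin rfl).toEquiv (fun x => f x)

lemma blockEmb_eig {n : ℕ} (X : Matrix (Fin n) (Fin n) ℝ) (i : Fin n)
    (a : Fin (blockSet X i).card) : eigval X (blockEmb X i a) = eigval X i := by
  have h : blockEmb X i a ∈ blockSet X i := ((blockSet X i).orderIsoOfFin rfl a).2
  simpa [blockSet] using h

lemma blockEmb_idx {n : ℕ} (X : Matrix (Fin n) (Fin n) ℝ) (i : Fin n) :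
    blockEmb X i (blockIdx X i) = i := by
  simp [blockEmb, blockIdx]

lemma blockEmb_mono {n : ℕ} (X : Matrix (Fin n) (Fin n) ℝ) (i : Fin n) :
    StrictMono (blockEmb X i) := by
  intro a b hab
  exact ((blockSet X i).orderIsoOfFin rfl).strictMono hab

lemma eigval_blockMat {n : ℕ} {X K0 W0 : Matrix (Fin n) (Fin n) ℝ} {z : Fin n → ℝ}
    (hW0 : W0 * W0ᵀ = 1)
    (h1 : ∀ i j, eigval X i ≠ eigval X j → W0 i j = 0)
    (h2 : ∀ i j, eigval X i = eigval X j → (W0ᵀ * K0 * W0) i j = if i = j then z i else 0)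
    (h3 : ∀ i j, i ≤ j → eigval X i = eigval X j → z j ≤ z i) (i : Fin n) :
    eigval (blockMat X K0 i) = z ∘ blockEmb X i := by
  have hsub : ∀ (f : Fin n → ℝ), (∀ j, eigval X j ≠ eigval X i → f j = 0) →
      ∑ a, f (blockEmb X i a) = ∑ j, f j := by
    intro f hf
    rw [sum_blockEmb]
    refine Finset.sum_subset (Finset.subset_univ _) fun j _ hj => hf j ?_
    simpa [blockSet] using hj
  set P : Matrix (Fin (blockSet X i).card) (Fin (blockSet X i).card) ℝ :=
    Matrix.of fun a b => W0 (blockEmb X i a) (blockEmb X i b) with hPdef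
  refine eigval_unique (P := P) ?_ ?_ ?_
  · ext a b
    have e := congrFun (congrFun hW0 (blockEmb X i a)) (blockEmb X i b)
    rw [Matrix.mul_apply] at e ⊢
    simp only [hPdef, Matrix.transpose_apply, Matrix.of_apply] at e ⊢
    rw [hsub (fun j => W0 (blockEmb X i a) j * W0 (blockEmb X i b) j), e]
    · simp [Matrix.one_apply, (blockEmb_mono X i).injective.eq_iff]
    · intro j hj
      rw [h1 _ j (by rw [blockEmb_eig]; exact Ne.symm hj), zero_mul]
  · intro a b hab
    exact h3 _ _ ((blockEmb_mono X i).monotone hab) (by rw [blockEmb_eig, blockEmb_eig])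
  · ext a b
    rw [Matrix.mul_apply]
    simp only [Matrix.mul_diagonal, hPdef, Matrix.transpose_apply, Matrix.of_apply, blockMat,
      Function.comp]
    rw [hsub (fun j => W0 (blockEmb X i a) j * z j * W0 (blockEmb X i b) j)]
    · have hK : K0 = W0 * ((W0ᵀ * K0 * W0) * W0ᵀ) := by
        rw [Matrix.mul_assoc (W0ᵀ * K0), hW0, Matrix.mul_one, ← Matrix.mul_assoc, hW0,
          Matrix.one_mul]
      conv_lhs => rw [hK]
      rw [Matrix.mul_apply]
      refine Finset.sum_congr rfl fun k _ => ?_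
      by_cases hk : eigval X k = eigval X i
      · rw [mul_assoc (W0 _ k) (z k)]
        congr 1
        rw [Matrix.mul_apply, Finset.sum_eq_single k]
        · rw [h2 k k rfl, if_pos rfl, Matrix.transpose_apply]
        · intro q _ hq
          by_cases hq2 : eigval X q = eigval X i
          · rw [h2 k q (hk.trans hq2.symm), if_neg (Ne.symm hq), zero_mul]
          · rw [Matrix.transpose_apply,
              h1 _ q (by rw [blockEmb_eig]; exact Ne.symm hq2), mul_zero]
        · simp
      · rw [h1 _ k (by rw [blockEmb_eig]; exact Ne.symm hk)]
        simp
    · intro j hj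
      rw [h1 _ j (by rw [blockEmb_eig]; exact Ne.symm hj)]
      simp

lemma isSymm_coe {n : ℕ} (A : Sym n) : (A : Matrix (Fin n) (Fin n) ℝ).IsSymm := A.2

lemma sym_conj_symm {n : ℕ} (U H : Matrix (Fin n) (Fin n) ℝ) (hH : H.IsSymm) :
    (Uᵀ * H * U).IsSymm := by
  unfold Matrix.IsSymm
  rw [Matrix.transpose_mul, Matrix.transpose_mul, Matrix.transpose_transpose, hH.eq,
    Matrix.mul_assoc]

lemma eig_dir_ultra {n : ℕ} (X H : Sym n) {U : Matrix (Fin n) (Fin n) ℝ}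
    (hU : U ∈ eigOrth X.val) (l : Ultrafilter (ℝ × Sym n))
    (hl : (l : Filter (ℝ × Sym n)) ≤ (𝓝[>] (0 : ℝ)) ×ˢ 𝓝 H) :
    Tendsto (fun p : ℝ × Sym n => p.1⁻¹ • (eigval (X + p.1 • p.2).val - eigval X.val)) l
      (𝓝 (lambdaDir X.val U H.val)) ∧
    ∀ i, eigval (blockMat X.val (Uᵀ * H.val * U) i) =
      lambdaDir X.val U H.val ∘ blockEmb X.val i := by
  obtain ⟨hU1, hU2⟩ := hU
  have hU1' := orth_comm hU1
  have hf : Tendsto (fun p : ℝ × Sym n => p.1) l (𝓝[>] (0 : ℝ)) := tendsto_fst.mono_left hl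
  have hs : Tendsto (fun p : ℝ × Sym n => p.2) l (𝓝 H) := tendsto_snd.mono_left hl
  have ht : Tendsto (fun p : ℝ × Sym n => p.1) l (𝓝 0) := hf.mono_right nhdsWithin_le_nhds
  have htp : ∀ᶠ p : ℝ × Sym n in l, 0 < p.1 := hf.eventually self_mem_nhdsWithin
  have hex : ∀ p : ℝ × Sym n, ∃ P : Matrix (Fin n) (Fin n) ℝ, P * Pᵀ = 1 ∧
      (X + p.1 • p.2).val = P * Matrix.diagonal (eigval (X + p.1 • p.2).val) * Pᵀ :=
    fun p => exists_eigOrth (isSymm_coe _)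
  choose P hP hPe using hex
  have hK : Tendsto (fun p : ℝ × Sym n => Uᵀ * p.2.val * U) l (𝓝 (Uᵀ * H.val * U)) := by
    have hc : Continuous fun A : Sym n => Uᵀ * A.val * U := by fun_prop
    exact (hc.tendsto H).comp hs
  obtain ⟨W0, z, a1, a2, a3, a4, a5⟩ := eig_dir_core l (t := fun p => p.1)
    (K := fun p => Uᵀ * p.2.val * U) (W := fun p => Uᵀ * P p)
    (L := fun p => eigval (X + p.1 • p.2).val) (d := eigval X.val) (K0 := Uᵀ * H.val * U)
    ht htp hK
    (fun p => by
      rw [Matrix.transpose_mul, Matrix.transpose_transpose, Matrix.mul_assoc,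
        ← Matrix.mul_assoc (P p), hP, Matrix.one_mul, hU1'])
    (eigval_antitone (isSymm_coe X)) (fun p => eigval_antitone (isSymm_coe _))
    (fun p => by
      have e1 : Matrix.diagonal (eigval X.val) = Uᵀ * X.val * U := by
        conv_rhs => rw [hU2]
        rw [Matrix.mul_assoc, Matrix.mul_assoc, hU1', Matrix.mul_one, ← Matrix.mul_assoc, hU1',
          Matrix.one_mul]
      rw [e1, Matrix.transpose_mul, Matrix.transpose_transpose]
      have e2 : Uᵀ * X.val * U + p.1 • (Uᵀ * p.2.val * U) = Uᵀ * (X + p.1 • p.2).val * U := by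
        have : (X + p.1 • p.2).val = X.val + p.1 • p.2.val := rfl
        rw [this]
        simp [Matrix.mul_add, Matrix.add_mul]
      rw [e2]
      conv_lhs => rw [hPe p]
      simp only [Matrix.mul_assoc])
  have hb := eigval_blockMat a1 a3 a4 a5
  have hlz : lambdaDir X.val U H.val = z := by
    funext i
    have := congrFun (hb i) (blockIdx X.val i)
    rw [Function.comp, blockEmb_idx] at this
    exact this
  rw [hlz]
  refine ⟨tendsto_pi_nhds.mpr fun i => ?_, hb⟩
  simpa using a2 i

lemma eig_dir {n : ℕ} (X H : Sym n) {U : Matrix (Fin n) (Fin n) ℝ} (hU : U ∈ eigOrth X.val) :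
    Tendsto (fun p : ℝ × Sym n => p.1⁻¹ • (eigval (X + p.1 • p.2).val - eigval X.val))
      ((𝓝[>] (0 : ℝ)) ×ˢ 𝓝 H) (𝓝 (lambdaDir X.val U H.val)) :=
  tendsto_iff_ultrafilter _ _ _ |>.mpr fun l hl => (eig_dir_ultra X H hU l hl).1

lemma eigval_block_lambdaDir {n : ℕ} (X H : Sym n) {U : Matrix (Fin n) (Fin n) ℝ}
    (hU : U ∈ eigOrth X.val) (i : Fin n) :
    eigval (blockMat X.val (Uᵀ * H.val * U) i) =
      lambdaDir X.val U H.val ∘ blockEmb X.val i := by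
  have hne : ((𝓝[>] (0 : ℝ)) ×ˢ 𝓝 H).NeBot := inferInstance
  exact (eig_dir_ultra X H hU (Ultrafilter.of _) (Ultrafilter.of_le _)).2 i


/-! ## Subderivatives -/

lemma subderiv_le_of_map {E F : Type*} [AddCommGroup E] [Module ℝ E] [TopologicalSpace E]
    [AddCommGroup F] [Module ℝ F] [TopologicalSpace F]
    {f₁ : E → EReal} {f₂ : F → EReal} {x₁ w₁ : E} {x₂ w₂ : F} (φ : ℝ × E → F)
    (hφ : Tendsto φ ((𝓝[>] (0 : ℝ)) ×ˢ 𝓝 w₁) (𝓝 w₂))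
    (hf : ∀ t : ℝ, 0 < t → ∀ w : E, f₁ (x₁ + t • w) = f₂ (x₂ + t • φ (t, w)))
    (hx : f₁ x₁ = f₂ x₂) :
    subderiv f₂ x₂ w₂ ≤ subderiv f₁ x₁ w₁ := by
  unfold subderiv
  have hm : Tendsto (fun p : ℝ × E => (p.1, φ p)) ((𝓝[>] (0 : ℝ)) ×ˢ 𝓝 w₁)
      ((𝓝[>] (0 : ℝ)) ×ˢ 𝓝 w₂) := tendsto_fst.prodMk hφ
  refine (liminf_le_liminf_of_le (g := map (fun p : ℝ × E => (p.1, φ p)) _) hm).trans ?_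
  show liminf ((fun p : ℝ × F => ((p.1⁻¹ : ℝ) : EReal) * (f₂ (x₂ + p.1 • p.2) - f₂ x₂)) ∘
    (fun p : ℝ × E => (p.1, φ p))) ((𝓝[>] (0 : ℝ)) ×ˢ 𝓝 w₁) ≤ _
  refine le_of_eq (liminf_congr ?_)
  have htp : ∀ᶠ p : ℝ × E in (𝓝[>] (0 : ℝ)) ×ˢ 𝓝 w₁, 0 < p.1 :=
    tendsto_fst.eventually self_mem_nhdsWithin
  filter_upwards [htp] with p hp
  simp only [Function.comp]
  rw [hf p.1 hp p.2, hx]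

/-- The matrix `P Diag(w) Pᵀ` as an element of `Sⁿ`. -/
def conjSym {n : ℕ} (P : Matrix (Fin n) (Fin n) ℝ) (w : Fin n → ℝ) : Sym n :=
  ⟨P * Matrix.diagonal w * Pᵀ, isSymm_conj P w⟩

lemma specFn_conjSym {n : ℕ} {θ : (Fin n → ℝ) → EReal} (hsym : SymmetricFn θ)
    {P : Matrix (Fin n) (Fin n) ℝ} (hP : P * Pᵀ = 1) (w : Fin n → ℝ) :
    specFn θ (conjSym P w) = θ w := by
  obtain ⟨τ, h⟩ := eigval_conj_perm hP w
  show θ (eigval (P * Matrix.diagonal w * Pᵀ)) = θ w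
  rw [h]
  exact hsym w τ

lemma tendsto_conjSym_zero {n : ℕ} {ι : Type*} {l : Filter ι}
    {P : ι → Matrix (Fin n) (Fin n) ℝ} {δ : ι → Fin n → ℝ} (hP : ∀ p, P p * (P p)ᵀ = 1)
    (hδ : Tendsto δ l (𝓝 0)) : Tendsto (fun p => conjSym (P p) (δ p)) l (𝓝 0) := by
  rw [tendsto_iff_ultrafilter]
  intro u hu
  obtain ⟨P0, -, h0⟩ := ultra_orth u P (Eventually.of_forall hP)
  rw [Topology.IsInducing.subtypeVal.tendsto_nhds_iff]
  have hdiag : Tendsto (fun p => Matrix.diagonal (δ p)) u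
      (𝓝 (Matrix.diagonal (0 : Fin n → ℝ))) := by
    have hc : Continuous fun w : Fin n → ℝ => Matrix.diagonal w := by fun_prop
    exact (hc.tendsto 0).comp (hδ.mono_left hu)
  have := tendsto_mat_mul (tendsto_mat_mul h0 hdiag) (tendsto_mat_transpose h0)
  simpa [conjSym, Function.comp_def] using this

lemma subderiv_spec {n : ℕ} {θ : (Fin n → ℝ) → EReal} (hsym : SymmetricFn θ)
    (X H : Sym n) {U : Matrix (Fin n) (Fin n) ℝ} (hU : U ∈ eigOrth X.val) :
    subderiv (specFn θ) X H = subderiv θ (eigval X.val) (lambdaDir X.val U H.val) := by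
  apply le_antisymm
  · have hex : ∀ t : ℝ, ∃ P : Matrix (Fin n) (Fin n) ℝ, P * Pᵀ = 1 ∧
        (X + t • H).val = P * Matrix.diagonal (eigval (X + t • H).val) * Pᵀ :=
      fun t => exists_eigOrth (isSymm_coe _)
    choose P hP hPe using hex
    refine subderiv_le_of_map (fun p : ℝ × (Fin n → ℝ) =>
      H + conjSym (P p.1) (p.2 - p.1⁻¹ • (eigval (X + p.1 • H).val - eigval X.val))) ?_ ?_ rfl
    · have h1 : Tendsto (fun p : ℝ × (Fin n → ℝ) => p.1⁻¹ • (eigval (X + p.1 • H).val -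
          eigval X.val)) ((𝓝[>] (0 : ℝ)) ×ˢ 𝓝 (lambdaDir X.val U H.val))
          (𝓝 (lambdaDir X.val U H.val)) :=
        (eig_dir X H hU).comp (tendsto_fst.prodMk (tendsto_const_nhds (x := H)))
      have h2 : Tendsto (fun p : ℝ × (Fin n → ℝ) => p.2 - p.1⁻¹ • (eigval (X + p.1 • H).val -
          eigval X.val)) ((𝓝[>] (0 : ℝ)) ×ˢ 𝓝 (lambdaDir X.val U H.val)) (𝓝 0) := by
        have := (tendsto_snd (f := 𝓝[>] (0 : ℝ)) (g := 𝓝 (lambdaDir X.val U H.val))).sub h1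
        rwa [sub_self] at this
      have h3 := tendsto_conjSym_zero (P := fun p : ℝ × (Fin n → ℝ) => P p.1)
        (fun p => hP p.1) h2
      have h4 := (tendsto_const_nhds (x := H)).add h3
      rwa [add_zero] at h4
    · intro t ht w
      rw [← specFn_conjSym hsym (hP t)]
      congr 1
      apply Subtype.ext
      show P t * Matrix.diagonal (eigval X.val + t • w) * (P t)ᵀ =
        X.val + t • (H.val + P t * Matrix.diagonal (w - t⁻¹ • (eigval (X + t • H).val -
          eigval X.val)) * (P t)ᵀ)
      have e1 : X.val + t • H.val = P t * Matrix.diagonal (eigval (X + t • H).val) * (P t)ᵀ :=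
        hPe t
      rw [smul_add, ← add_assoc, e1, ← Matrix.smul_mul, ← Matrix.mul_smul, ← Matrix.add_mul,
        ← Matrix.mul_add, ← Matrix.diagonal_smul, Matrix.diagonal_add]
      congr 3
      funext i
      simp only [Pi.add_apply, Pi.smul_apply, Pi.sub_apply, smul_eq_mul]
      field_simp
      ring
  · refine subderiv_le_of_map (fun p : ℝ × Sym n =>
      p.1⁻¹ • (eigval (X + p.1 • p.2).val - eigval X.val)) (eig_dir X H hU) ?_ rfl
    intro t ht W
    show θ _ = θ _
    congr 1
    simp only
    rw [smul_smul, mul_inv_cancel₀ ht.ne', one_smul]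
    abel

lemma subderiv_theta_ge {n : ℕ} {θ : (Fin n → ℝ) → EReal} (hsym : SymmetricFn θ)
    (X : Sym n) {U : Matrix (Fin n) (Fin n) ℝ} (hU : U ∈ eigOrth X.val)
    (τ : Equiv.Perm (Fin n)) (hτ : ∀ i, eigval X.val (τ i) = eigval X.val i) (w : Fin n → ℝ) :
    subderiv (specFn θ) X (conjSym U (w ∘ τ)) ≤ subderiv θ (eigval X.val) w := by
  obtain ⟨hU1, hU2⟩ := hU
  refine subderiv_le_of_map (fun p : ℝ × (Fin n → ℝ) => conjSym U (p.2 ∘ τ)) ?_ ?_ rfl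
  · have hc : Continuous fun w : Fin n → ℝ => conjSym U (w ∘ τ) := by
      unfold conjSym
      refine Continuous.subtype_mk ?_ _
      have : Continuous fun w : Fin n → ℝ => w ∘ τ :=
        continuous_pi fun i => continuous_apply (τ i)
      fun_prop
    exact (hc.tendsto w).comp tendsto_snd
  · intro t _ w'
    rw [← hsym _ τ, ← specFn_conjSym hsym hU1]
    congr 1
    apply Subtype.ext
    show U * Matrix.diagonal (fun i => (eigval X.val + t • w') (τ i)) * Uᵀ =
      X.val + t • (U * Matrix.diagonal (w' ∘ τ) * Uᵀ)
    conv_rhs => rw [hU2]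
    rw [← Matrix.smul_mul, ← Matrix.mul_smul, ← Matrix.add_mul,
        ← Matrix.mul_add, ← Matrix.diagonal_smul, Matrix.diagonal_add]
    congr 3
    funext i
    simp [hτ i]

lemma ipM_smul {n : ℕ} (Y W : Sym n) (t : ℝ) : ipM Y (t • W) = t * ipM Y W := by
  simp [ipM]

lemma nrm_smul {n : ℕ} (W : Sym n) {t : ℝ} (ht : 0 < t) :
    nrm ipM (t • W) = t * nrm ipM W := by
  unfold nrm
  have : ipM (t • W) (t • W) = t ^ 2 * ipM W W := by
    simp [ipM]; ring
  rw [this, Real.sqrt_mul (sq_nonneg t), Real.sqrt_sq ht.le]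

lemma nrm_pos {n : ℕ} {W : Sym n} (hW : W ≠ 0) : 0 < nrm ipM W := by
  unfold nrm
  rw [Real.sqrt_pos]
  by_contra h
  exact hW (Subtype.ext (eq_zero_of_trace_self (isSymm_coe W) (not_lt.mp h)))

lemma continuous_ipM {n : ℕ} (Y : Sym n) : Continuous fun W : Sym n => ipM Y W := by
  unfold ipM; fun_prop

lemma continuous_nrm {n : ℕ} : Continuous fun W : Sym n => nrm ipM W := by
  unfold nrm ipM; fun_prop

lemma reg_subderiv {n : ℕ} {g : Sym n → EReal} {X Y : Sym n} (h : RegSubgrad ipM g X Y)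
    (W : Sym n) : ((ipM Y W : ℝ) : EReal) ≤ subderiv g X W := by
  obtain ⟨⟨hx1, hx2⟩, hl⟩ := h
  obtain ⟨x, hx⟩ : ∃ x : ℝ, g X = (x : EReal) := ⟨(g X).toReal, (EReal.coe_toReal hx1 hx2).symm⟩
  have main : ∀ ε : ℝ, 0 < ε → ((ipM Y W - ε * nrm ipM W : ℝ) : EReal) ≤ subderiv g X W := by
    intro ε hε
    have h1 : ((-ε : ℝ) : EReal) < liminf (fun y : Sym n => (((nrm ipM (y - X))⁻¹ : ℝ) : EReal) *
        (g y - g X - ((ipM Y (y - X) : ℝ) : EReal))) (𝓝[≠] X) :=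
      lt_of_lt_of_le (by exact_mod_cast neg_lt_zero.mpr hε) hl
    have h2 := eventually_lt_of_lt_liminf h1
    rw [eventually_nhdsWithin_iff] at h2
    have hmap : Tendsto (fun p : ℝ × Sym n => X + p.1 • p.2) ((𝓝[>] (0 : ℝ)) ×ˢ 𝓝 W) (𝓝 X) := by
      have hc : Continuous fun p : ℝ × Sym n => X + p.1 • p.2 := by fun_prop
      have := hc.tendsto (0, W)
      simp only [zero_smul, add_zero] at this
      refine this.mono_left ?_
      rw [nhds_prod_eq]
      exact prod_mono nhdsWithin_le_nhds le_rfl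
    have h3 := hmap.eventually h2
    have htp : ∀ᶠ p : ℝ × Sym n in (𝓝[>] (0 : ℝ)) ×ˢ 𝓝 W, 0 < p.1 :=
      tendsto_fst.eventually self_mem_nhdsWithin
    have hcont : Tendsto (fun p : ℝ × Sym n => ((ipM Y p.2 - ε * nrm ipM p.2 : ℝ) : EReal))
        ((𝓝[>] (0 : ℝ)) ×ˢ 𝓝 W) (𝓝 ((ipM Y W - ε * nrm ipM W : ℝ) : EReal)) := by
      have hc : Continuous fun V : Sym n => ((ipM Y V - ε * nrm ipM V : ℝ) : EReal) :=
        continuous_coe_real_ereal.comp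
          ((continuous_ipM Y).sub (continuous_const.mul continuous_nrm))
      exact (hc.tendsto W).comp tendsto_snd
    rw [← hcont.liminf_eq]
    unfold subderiv
    refine liminf_le_liminf ?_
    filter_upwards [h3, htp] with p hp ht
    obtain ⟨t, V⟩ := p
    simp only at hp ht ⊢
    by_cases hV : V = 0
    · subst hV
      simp only [smul_zero, add_zero, hx]
      simp [ipM, nrm, ← EReal.coe_sub]
    · have hne : X + t • V ∈ ({X}ᶜ : Set (Sym n)) := by
        simp [ht.ne', hV]
      have hq := hp hne
      rw [add_sub_cancel_left, ipM_smul, nrm_smul V ht, hx] at hq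
      rw [hx]
      have hN := nrm_pos hV
      have htN : 0 < (t * nrm ipM V)⁻¹ := inv_pos.mpr (mul_pos ht hN)
      induction hg : g (X + t • V) using EReal.rec with
      | bot =>
        rw [hg, EReal.bot_sub, EReal.bot_sub, EReal.coe_mul_bot_of_pos htN] at hq
        exact absurd hq (not_lt_bot)
      | top =>
        rw [EReal.top_sub_coe, EReal.coe_mul_top_of_pos (inv_pos.mpr ht)]
        exact le_top
      | coe r =>
        rw [hg] at hq
        have hq' : -ε < (t * nrm ipM V)⁻¹ * (r - x - t * ipM Y V) := by exact_mod_cast hq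
        have hgoal : ipM Y V - ε * nrm ipM V ≤ t⁻¹ * (r - x) := by
          rw [inv_mul_eq_div, lt_div_iff₀ (mul_pos ht hN)] at hq'
          rw [inv_mul_eq_div, le_div_iff₀ ht]
          nlinarith
        exact_mod_cast hgoal
  refine le_of_forall_lt fun c hc => ?_
  obtain ⟨q, hcq, hq⟩ := EReal.lt_iff_exists_real_btwn.mp hc
  have hq' : q < ipM Y W := by exact_mod_cast hq
  refine lt_of_lt_of_le hcq (le_trans ?_ (main ((ipM Y W - q) / (nrm ipM W + 1))
    (div_pos (by linarith) (by have : 0 ≤ nrm ipM W := Real.sqrt_nonneg _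
                               linarith))))
  have hN : 0 ≤ nrm ipM W := Real.sqrt_nonneg _
  have : (ipM Y W - q) / (nrm ipM W + 1) * nrm ipM W ≤ ipM Y W - q := by
    rw [div_mul_eq_mul_div, div_le_iff₀ (by linarith)]
    nlinarith
  exact_mod_cast (by linarith : q ≤ ipM Y W - (ipM Y W - q) / (nrm ipM W + 1) * nrm ipM W)

lemma reg_normal {n : ℕ} {g : Sym n → EReal} {X Y : Sym n} (h : RegSubgrad ipM g X Y) :
    (Y, (-1 : ℝ)) ∈ regNormalCone (ipProd ipM) (epiSet g) (X, (g X).toReal) := by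
  have hsub := reg_subderiv h
  obtain ⟨⟨hx1, hx2⟩, -⟩ := h
  obtain ⟨x, hx⟩ : ∃ x : ℝ, g X = (x : EReal) := ⟨(g X).toReal, (EReal.coe_toReal hx1 hx2).symm⟩
  rintro ⟨W, β⟩ ⟨t, ws, ht, ht0, hws, hmem⟩
  have hW : Tendsto (fun k => (ws k).1) atTop (𝓝 W) := (continuous_fst.tendsto (W, β)).comp hws
  have hβ : Tendsto (fun k => (ws k).2) atTop (𝓝 β) := (continuous_snd.tendsto (W, β)).comp hws
  have hseq : Tendsto (fun k => (t k, (ws k).1)) atTop ((𝓝[>] (0 : ℝ)) ×ˢ 𝓝 W) :=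
    (tendsto_nhdsWithin_iff.mpr ⟨ht0, Eventually.of_forall ht⟩).prodMk hW
  have hβ' : Tendsto (fun k => (((ws k).2 : ℝ) : EReal)) atTop (𝓝 (β : EReal)) :=
    (continuous_coe_real_ereal.tendsto β).comp hβ
  have key : ((ipM Y W : ℝ) : EReal) ≤ (β : EReal) := by
    refine (hsub W).trans ?_
    unfold subderiv
    refine (liminf_le_liminf_of_le (g := map (fun k => (t k, (ws k).1)) atTop) hseq).trans ?_
    rw [← hβ'.liminf_eq]
    show liminf ((fun p : ℝ × Sym n => ((p.1⁻¹ : ℝ) : EReal) * (g (X + p.1 • p.2) - g X)) ∘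
      (fun k => (t k, (ws k).1))) atTop ≤ _
    refine liminf_le_liminf (Eventually.of_forall fun k => ?_)
    have hm : g (X + t k • (ws k).1) ≤ (((g X).toReal + t k * (ws k).2 : ℝ) : EReal) := hmem k
    simp only [Function.comp]
    rw [hx] at hm ⊢
    rw [EReal.toReal_coe] at hm
    induction hg : g (X + t k • (ws k).1) using EReal.rec with
    | bot =>
      rw [EReal.bot_sub, EReal.coe_mul_bot_of_pos (inv_pos.mpr (ht k))]
      exact bot_le
    | top =>
      rw [hg] at hm
      exact absurd hm (not_le.mpr (EReal.coe_lt_top _))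
    | coe r =>
      rw [hg] at hm
      have hm' : r ≤ x + t k * (ws k).2 := by exact_mod_cast hm
      have : (t k)⁻¹ * (r - x) ≤ (ws k).2 := by
        rw [inv_mul_le_iff₀ (ht k)]; linarith
      exact_mod_cast this
  have key' : ipM Y W ≤ β := by exact_mod_cast key
  show ipM Y W + (-1) * β ≤ 0
  linarith

lemma subderiv_of_normal {n : ℕ} {g : Sym n → EReal} {X Y : Sym n} (hfin : IsFiniteAt g X)
    (h : (Y, (-1 : ℝ)) ∈ regNormalCone (ipProd ipM) (epiSet g) (X, (g X).toReal)) (W : Sym n) :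
    ((ipM Y W : ℝ) : EReal) ≤ subderiv g X W := by
  obtain ⟨hx1, hx2⟩ := hfin
  obtain ⟨x, hx⟩ : ∃ x : ℝ, g X = (x : EReal) := ⟨(g X).toReal, (EReal.coe_toReal hx1 hx2).symm⟩
  by_contra hcon
  rw [not_le] at hcon
  obtain ⟨c, hc1, hc2⟩ := EReal.lt_iff_exists_real_btwn.mp hcon
  have hfreq := frequently_lt_of_liminf_lt (by isBoundedDefault) hc1
  have htp : ∀ᶠ p : ℝ × Sym n in (𝓝[>] (0 : ℝ)) ×ˢ 𝓝 W, 0 < p.1 :=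
    tendsto_fst.eventually self_mem_nhdsWithin
  have : FirstCountableTopology (Matrix (Fin n) (Fin n) ℝ) :=
    inferInstanceAs (FirstCountableTopology (Fin n → Fin n → ℝ))
  have : (𝓝 W).IsCountablyGenerated := by
    rw [show 𝓝 W = comap Subtype.val (𝓝 W.val) from nhds_induced _ _]
    infer_instance
  obtain ⟨s, hs, hsp⟩ := exists_seq_forall_of_frequently (hfreq.and_eventually htp)
  have h1 : Tendsto (fun k => (s k).1) atTop (𝓝[>] (0 : ℝ)) := tendsto_fst.comp hs
  have h2 : Tendsto (fun k => (s k).2) atTop (𝓝 W) := tendsto_snd.comp hs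
  have hT : (W, c) ∈ tangentCone (epiSet g) (X, (g X).toReal) := by
    refine ⟨fun k => (s k).1, fun k => ((s k).2, c), fun k => (hsp k).2,
      h1.mono_right nhdsWithin_le_nhds, h2.prodMk_nhds tendsto_const_nhds, fun k => ?_⟩
    obtain ⟨hq, ht⟩ := hsp k
    show g (X + (s k).1 • (s k).2) ≤ (((g X).toReal + (s k).1 * c : ℝ) : EReal)
    rw [hx] at hq ⊢
    rw [EReal.toReal_coe]
    induction hg : g (X + (s k).1 • (s k).2) using EReal.rec with
    | bot => exact bot_le
    | top =>
      rw [hg, EReal.top_sub_coe, EReal.coe_mul_top_of_pos (inv_pos.mpr ht)] at hq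
      exact absurd hq not_top_lt
    | coe r =>
      rw [hg] at hq
      have hq' : (s k).1⁻¹ * (r - x) < c := by exact_mod_cast hq
      rw [inv_mul_lt_iff₀ ht] at hq'
      exact_mod_cast (by linarith : r ≤ x + (s k).1 * c)
  have h3 : ipM Y W + (-1) * c ≤ 0 := h (W, c) hT
  have h4 : c < ipM Y W := by exact_mod_cast hc2
  linarith

lemma subderiv_of_regular {n : ℕ} {g : Sym n → EReal} {X Y : Sym n}
    (hreg : SubdiffRegularAt ipM g X) (hY : LimSubgrad ipM g X Y) (W : Sym n) :
    ((ipM Y W : ℝ) : EReal) ≤ subderiv g X W := by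
  refine subderiv_of_normal hreg.1 ?_ W
  rw [hreg.2]
  obtain ⟨xs, vs, h1, h2, h3, h4⟩ := hY
  refine ⟨fun k => (xs k, (g (xs k)).toReal), fun k => (vs k, -1), fun k => ?_,
    fun k => reg_normal (h1 k), h2.prodMk_nhds ?_, h3.prodMk_nhds tendsto_const_nhds⟩
  · show g (xs k) ≤ (((g (xs k)).toReal : ℝ) : EReal)
    rw [EReal.coe_toReal (h1 k).1.1 (h1 k).1.2]
  · exact (EReal.tendsto_toReal hreg.1.1 hreg.1.2).comp h4

/-! ## Block version of Fan's inequality -/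

lemma sum_blocks {n : ℕ} (d f : Fin n → ℝ) :
    ∑ i, f i = ∑ μ ∈ Finset.univ.image d, ∑ j ∈ Finset.univ.filter (fun j => d j = μ), f j :=
  (Finset.sum_fiberwise_of_maps_to (fun i _ => Finset.mem_image_of_mem d (Finset.mem_univ i))
    f).symm

lemma eigval_diag_block {n : ℕ} (X : Matrix (Fin n) (Fin n) ℝ) (y v : Fin n → ℝ)
    (σ : Equiv.Perm (Fin n))
    (hσblock : ∀ i, eigval X (σ i) = eigval X i) (hv : ∀ i, v i = y (σ i))
    (hvdec : ∀ i j : Fin n, i ≤ j → eigval X i = eigval X j → v j ≤ v i) (i : Fin n) :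
    eigval (Matrix.diagonal fun a => y (blockEmb X i a)) = v ∘ blockEmb X i := by
  let e := (blockSet X i).orderIsoOfFin rfl
  let s : Equiv.Perm {x // x ∈ blockSet X i} := σ.subtypePerm (fun x => by
    simp [blockSet, hσblock])
  let τ : Equiv.Perm (Fin (blockSet X i).card) := (e.toEquiv.trans s).trans e.symm.toEquiv
  have hτ : ∀ a, blockEmb X i (τ a) = σ (blockEmb X i a) := by
    intro a
    show ((e (e.symm (s (e a))) : {x // x ∈ blockSet X i}) : Fin n) = σ (e a)
    rw [OrderIso.apply_symm_apply]
    rfl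
  have hvy : v ∘ blockEmb X i = (fun a => y (blockEmb X i a)) ∘ τ := by
    funext a
    simp [hv, hτ]
  refine eigval_unique (orth_perm_mat (P := 1) (by simp) τ) ?_ ?_
  · intro a b hab
    exact hvdec _ _ ((blockEmb_mono X i).monotone hab) (by rw [blockEmb_eig, blockEmb_eig])
  · rw [hvy, conj_perm_mat]
    simp

lemma fan_block {n : ℕ} (X H : Sym n) {U : Matrix (Fin n) (Fin n) ℝ} (hU : U ∈ eigOrth X.val)
    (Y : Sym n) (y v : Fin n → ℝ) (σ : Equiv.Perm (Fin n))
    (hYdec : Y.val = U * Matrix.diagonal y * Uᵀ)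
    (hσblock : ∀ i, eigval X.val (σ i) = eigval X.val i)
    (hv : ∀ i, v i = y (σ i))
    (hvdec : ∀ i j : Fin n, i ≤ j → eigval X.val i = eigval X.val j → v j ≤ v i) :
    ipM Y H ≤ ipV v (lambdaDir X.val U H.val) ∧
      (ipM Y H = ipV v (lambdaDir X.val U H.val) ↔
        ∀ i : Fin n, simOrdSpec (Matrix.diagonal fun a => y (blockEmb X.val i a))
              (blockMat X.val (Uᵀ * H.val * U) i)) := by
  set K := Uᵀ * H.val * U with hK
  have hKs : K.IsSymm := sym_conj_symm U H.val (isSymm_coe H)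
  set lam := lambdaDir X.val U H.val with hlam
  have h1 : ipM Y H = ∑ i, y i * K i i := by
    unfold ipM
    rw [hYdec, Matrix.mul_assoc, Matrix.mul_assoc, Matrix.trace_mul_comm]
    have : Matrix.diagonal y * (Uᵀ * H.val) * U = Matrix.diagonal y * K := by
      rw [hK, Matrix.mul_assoc]
    rw [this]
    simp [Matrix.trace]
  have hsA : ∀ i, (Matrix.diagonal fun a => y (blockEmb X.val i a)).IsSymm :=
    fun i => Matrix.isSymm_diagonal _
  have hsB : ∀ i, (blockMat X.val K i).IsSymm := by
    intro i
    ext a b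
    exact hKs.apply _ _
  have hfilt : ∀ i, Finset.univ.filter (fun j => eigval X.val j = eigval X.val i) =
      blockSet X.val i := by
    intro i; ext j; simp [blockSet]
  have hL : ∀ i, ((Matrix.diagonal fun a => y (blockEmb X.val i a)) *
      blockMat X.val K i).trace = ∑ j ∈ blockSet X.val i, y j * K j j := by
    intro i
    rw [← sum_blockEmb X.val i (fun j => y j * K j j)]
    simp [Matrix.trace, blockMat]
  have hR : ∀ i, ∑ a, eigval (Matrix.diagonal fun a => y (blockEmb X.val i a)) a *
      eigval (blockMat X.val K i) a = ∑ j ∈ blockSet X.val i, v j * lam j := by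
    intro i
    rw [← sum_blockEmb X.val i (fun j => v j * lam j),
      eigval_diag_block X.val y v σ hσblock hv hvdec i, eigval_block_lambdaDir X H hU i]
    rfl
  have hle : ∀ i, ∑ j ∈ blockSet X.val i, y j * K j j ≤ ∑ j ∈ blockSet X.val i, v j * lam j := by
    intro i
    rw [← hL, ← hR]
    exact fan_ineq (hsA i) (hsB i)
  have hle' : ∀ μ ∈ Finset.univ.image (eigval X.val),
      ∑ j ∈ Finset.univ.filter (fun j => eigval X.val j = μ), y j * K j j ≤
      ∑ j ∈ Finset.univ.filter (fun j => eigval X.val j = μ), v j * lam j := by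
    intro μ hμ
    obtain ⟨i, -, rfl⟩ := Finset.mem_image.mp hμ
    rw [hfilt]
    exact hle i
  rw [h1]
  unfold ipV
  rw [sum_blocks (eigval X.val) (fun i => y i * K i i),
    sum_blocks (eigval X.val) (fun i => v i * lam i)]
  refine ⟨Finset.sum_le_sum hle', ?_⟩
  rw [Finset.sum_eq_sum_iff_of_le hle']
  constructor
  · intro h i
    apply sim_of_fan_eq (hsA i) (hsB i)
    rw [hL, hR, ← hfilt]
    exact h _ (Finset.mem_image_of_mem _ (Finset.mem_univ i))
  · intro h μ hμ
    obtain ⟨i, -, rfl⟩ := Finset.mem_image.mp hμ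
    rw [hfilt, ← hL, ← hR]
    exact fan_eq_of_sim (h i)

lemma ipM_conjSym {n : ℕ} {U : Matrix (Fin n) (Fin n) ℝ} (hU1 : U * Uᵀ = 1)
    {Y : Sym n} {y : Fin n → ℝ} (hYdec : Y.val = U * Matrix.diagonal y * Uᵀ) (w : Fin n → ℝ) :
    ipM Y (conjSym U w) = ∑ i, y i * w i := by
  unfold ipM conjSym
  rw [hYdec]
  exact trace_same hU1 y w

theorem critical_cone_spectral {n : ℕ} (θ : (Fin n → ℝ) → EReal)
    (X Y : Sym n) (U : Matrix (Fin n) (Fin n) ℝ) (y v : Fin n → ℝ) (σ : Equiv.Perm (Fin n))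
    (hsym : SymmetricFn θ) (hlsc : LowerSemicontinuous (specFn θ))
    (hY : LimSubgrad ipM (specFn θ) X Y)
    (hU : U ∈ eigOrth X.val)
    (hy : LimSubgrad ipV θ (eigval X.val) y)
    (hYdec : Y.val = U * Matrix.diagonal y * Uᵀ)
    (hσblock : ∀ i, eigval X.val (σ i) = eigval X.val i)
    (hv : ∀ i, v i = y (σ i))
    (hvdec : ∀ i j : Fin n, i ≤ j → eigval X.val i = eigval X.val j → v j ≤ v i)
    (hcase : SubdiffRegularAt ipM (specFn θ) X ∨
      (LocLipAtRelDom ipV θ (eigval X.val) ∧ RegSubgrad ipM (specFn θ) X Y)) :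
    ∀ H : Sym n,
      H ∈ criticalCone ipM (specFn θ) X Y ↔
        (lambdaDir X.val U H.val ∈ criticalCone ipV θ (eigval X.val) v ∧
          ∀ i : Fin n,
            simOrdSpec (Matrix.diagonal fun a => y (blockEmb X.val i a))
              (blockMat X.val (Uᵀ * H.val * U) i)) := by
  intro H
  have hreg : ∀ W : Sym n, ((ipM Y W : ℝ) : EReal) ≤ subderiv (specFn θ) X W := by
    rcases hcase with h | h
    · exact subderiv_of_regular h hY
    · exact reg_subderiv h.2
  obtain ⟨hfan, hfaneq⟩ := fan_block X H hU Y y v σ hYdec hσblock hv hvdec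
  have hd := subderiv_spec hsym X H hU
  have hge : ((ipV v (lambdaDir X.val U H.val) : ℝ) : EReal) ≤
      subderiv θ (eigval X.val) (lambdaDir X.val U H.val) := by
    refine le_trans ?_ (subderiv_theta_ge hsym X hU σ.symm (fun i => ?_) _)
    · refine le_trans (le_of_eq ?_) (hreg _)
      rw [ipM_conjSym hU.1 hYdec]
      congr 1
      unfold ipV
      rw [← Equiv.sum_comp σ (fun i => y i * (lambdaDir X.val U H.val ∘ σ.symm) i)]
      exact Finset.sum_congr rfl fun i _ => by simp [hv]
    · have := hσblock (σ.symm i)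
      rw [Equiv.apply_symm_apply] at this
      exact this.symm
  show subderiv (specFn θ) X H = ((ipM Y H : ℝ) : EReal) ↔
    (subderiv θ (eigval X.val) (lambdaDir X.val U H.val) =
      ((ipV v (lambdaDir X.val U H.val) : ℝ) : EReal) ∧ _)
  rw [hd, ← hfaneq]
  constructor
  · intro h
    rw [h] at hge
    have h1 : ipV v (lambdaDir X.val U H.val) ≤ ipM Y H := by exact_mod_cast hge
    have h2 := le_antisymm hfan h1
    exact ⟨by rw [h, h2], h2⟩
  · rintro ⟨h1, h2⟩
    rw [h1, h2]


end SpecPaper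
end
end

section
/- Let θ : ℝⁿ → [−∞,+∞] be symmetric and locally Lipschitz continuous relative to its domain, and let the spectral function g = θ∘λ be lower semicontinuous. Let (X,Y) ∈ gph ∂̂g with Y = U·Diag(y)·Uᵀ for some y ∈ ∂̂θ(λ(X)) and U ∈ Oⁿ(X). Then g is twice epi-differentiable at X for Y if and only if θ is twice epi-differentiable at λ(X) for y. -/
open Filter Topology Matrix

noncomputable section

namespace SpecPaper

/-! ## Generic variational analysis definitions over a topological real vector space -/

variable {E : Type*}

lemma exists_perm_of_inter {n : ℕ} {W : Matrix (Fin n) (Fin n) ℝ} {a b : Fin n → ℝ}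
    (hdet : W.det ≠ 0) (h : diagonal a * W = W * diagonal b) :
    ∃ σ : Equiv.Perm (Fin n), ∀ i, a (σ i) = b i := by
  rw [Matrix.det_apply] at hdet
  obtain ⟨σ, -, hσ⟩ := Finset.exists_ne_zero_of_sum_ne_zero hdet
  refine ⟨σ, fun i => ?_⟩
  have h1 : ∏ i, W (σ i) i ≠ 0 := fun h0 => hσ (by rw [h0, smul_zero])
  have h2 : W (σ i) i ≠ 0 := (Finset.prod_ne_zero_iff.1 h1) i (Finset.mem_univ i)
  have h3 := congrFun (congrFun h (σ i)) i
  rw [Matrix.diagonal_mul, Matrix.mul_diagonal, mul_comm] at h3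
  exact mul_left_cancel₀ h2 h3

lemma perm_of_conj_eq {n : ℕ} {V V' : Matrix (Fin n) (Fin n) ℝ} {a b : Fin n → ℝ}
    (hV : V * Vᵀ = 1) (hV' : V' * V'ᵀ = 1)
    (h : V * diagonal a * Vᵀ = V' * diagonal b * V'ᵀ) :
    ∃ σ : Equiv.Perm (Fin n), ∀ i, a (σ i) = b i := by
  have hV2 : Vᵀ * V = 1 := mul_eq_one_comm.1 hV
  have hV2' : V'ᵀ * V' = 1 := mul_eq_one_comm.1 hV'
  refine exists_perm_of_inter (W := Vᵀ * V') ?_ ?_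
  · have : (Vᵀ * V') * (V'ᵀ * V) = 1 := by
      rw [Matrix.mul_assoc, ← Matrix.mul_assoc V', hV', Matrix.one_mul, hV2]
    have h2 := congrArg Matrix.det this
    rw [Matrix.det_mul, Matrix.det_one] at h2
    exact left_ne_zero_of_mul_eq_one h2
  · calc diagonal a * (Vᵀ * V') = (Vᵀ * V) * diagonal a * Vᵀ * V' := by
          rw [hV2, Matrix.one_mul, Matrix.mul_assoc]
      _ = Vᵀ * (V * diagonal a * Vᵀ) * V' := by simp only [Matrix.mul_assoc]
      _ = Vᵀ * V' * diagonal b * (V'ᵀ * V') := by rw [h]; simp only [Matrix.mul_assoc]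
      _ = Vᵀ * V' * diagonal b := by rw [hV2', Matrix.mul_one]

lemma spectral_real {m : Type*} [Fintype m] [DecidableEq m] {A : Matrix m m ℝ}
    (hA : A.IsHermitian) : ∃ V : Matrix m m ℝ, V * Vᵀ = 1 ∧
      A = V * diagonal hA.eigenvalues * Vᵀ := by
  refine ⟨hA.eigenvectorUnitary, ?_, ?_⟩
  · have := Matrix.mem_unitaryGroup_iff.1 hA.eigenvectorUnitary.2
    simpa [Matrix.star_eq_conjTranspose] using this
  · have := hA.spectral_theorem
    simpa [Unitary.conjStarAlgAut_apply, Matrix.star_eq_conjTranspose, Function.comp_def] using this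

lemma isSymm_herm {n : ℕ} (K : Sym n) : K.val.IsHermitian := by
  have h := K.2
  change K.val.IsSymm at h
  rw [Matrix.IsHermitian, Matrix.conjTranspose_eq_transpose_of_trivial]
  exact h

lemma symT {n : ℕ} (K : Sym n) : K.valᵀ = K.val := K.2

lemma perm_conj {m : Type*} [Fintype m] [DecidableEq m] (V : Matrix m m ℝ) (a : m → ℝ)
    (σ : Equiv.Perm m) :
    (V.submatrix id σ) * diagonal (fun i => a (σ i)) * (V.submatrix id σ)ᵀ
      = V * diagonal a * Vᵀ := by
  ext i j
  rw [Matrix.mul_apply, Matrix.mul_apply]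
  simp only [Matrix.mul_diagonal, Matrix.submatrix_apply, Matrix.transpose_apply, id]
  exact Equiv.sum_comp σ (fun k => V i k * a k * V j k)

lemma perm_orth {m : Type*} [Fintype m] [DecidableEq m] (V : Matrix m m ℝ)
    (σ : Equiv.Perm m) (hV : V * Vᵀ = 1) :
    (V.submatrix id σ) * (V.submatrix id σ)ᵀ = 1 := by
  have := perm_conj V (fun _ => 1) σ
  simpa [hV] using this

lemma eigval_spec {n : ℕ} (K : Sym n) : ∃ V : Matrix (Fin n) (Fin n) ℝ, V * Vᵀ = 1 ∧
    K.val = V * diagonal (eigval K.val) * Vᵀ := by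
  obtain ⟨V, h1, h2⟩ := spectral_real (isSymm_herm K)
  set σ := Tuple.sort (fun j => -(isSymm_herm K).eigenvalues j)
  refine ⟨V.submatrix id σ, perm_orth V σ h1, ?_⟩
  have : eigval K.val = fun i => (isSymm_herm K).eigenvalues (σ i) := by
    rw [eigval, dif_pos (isSymm_herm K)]
  rw [this, perm_conj]
  exact h2

lemma specFn_conj {n : ℕ} {θ : (Fin n → ℝ) → EReal} (hsym : SymmetricFn θ) (K : Sym n)
    {V : Matrix (Fin n) (Fin n) ℝ} {z : Fin n → ℝ} (hV : V * Vᵀ = 1)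
    (hK : K.val = V * diagonal z * Vᵀ) : specFn θ K = θ z := by
  obtain ⟨V', h1, h2⟩ := eigval_spec K
  obtain ⟨σ, hσ⟩ := perm_of_conj_eq hV h1 (hK.symm.trans h2)
  have : eigval K.val = fun i => z (σ i) := funext fun i => (hσ i).symm
  rw [specFn, this, hsym]

/-- Fan's trace inequality. -/
lemma fan {n : ℕ} {U V : Matrix (Fin n) (Fin n) ℝ} {p q : Fin n → ℝ}
    (hU : U * Uᵀ = 1) (hV : V * Vᵀ = 1) (hpq : Monovary p q) :
    ((U * diagonal p * Uᵀ) * (V * diagonal q * Vᵀ)).trace ≤ ∑ i, p i * q i := by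
  have hU2 : Uᵀ * U = 1 := mul_eq_one_comm.1 hU
  have hV2 : Vᵀ * V = 1 := mul_eq_one_comm.1 hV
  set W := Uᵀ * V with hW
  have hW1 : W * Wᵀ = 1 := by
    rw [hW, Matrix.transpose_mul, Matrix.transpose_transpose, Matrix.mul_assoc,
      ← Matrix.mul_assoc V, hV, Matrix.one_mul, hU2]
  have hW2 : Wᵀ * W = 1 := mul_eq_one_comm.1 hW1
  have e1 : ((U * diagonal p * Uᵀ) * (V * diagonal q * Vᵀ)).trace
      = ∑ i, ∑ j, p i * (W i j) ^ 2 * q j := by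
    have : ((U * diagonal p * Uᵀ) * (V * diagonal q * Vᵀ)).trace
        = (diagonal p * W * (diagonal q * Wᵀ)).trace := by
      rw [Matrix.mul_assoc, Matrix.mul_assoc, Matrix.trace_mul_comm, hW, Matrix.transpose_mul,
        Matrix.transpose_transpose]
      simp only [Matrix.mul_assoc]
    rw [this, Matrix.trace]
    refine Finset.sum_congr rfl fun i _ => ?_
    rw [Matrix.diag_apply, Matrix.mul_apply]
    refine Finset.sum_congr rfl fun j _ => ?_
    rw [Matrix.diagonal_mul, Matrix.diagonal_mul, Matrix.transpose_apply]
    ring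
  have hD : (Matrix.of fun i j => (W i j) ^ 2) ∈ doublyStochastic ℝ (Fin n) := by
    rw [mem_doublyStochastic_iff_sum]
    refine ⟨fun i j => sq_nonneg _, fun i => ?_, fun j => ?_⟩
    · have := congrFun (congrFun hW1 i) i
      rw [Matrix.mul_apply, Matrix.one_apply_eq] at this
      simpa [sq] using this
    · have := congrFun (congrFun hW2 j) j
      rw [Matrix.mul_apply, Matrix.one_apply_eq] at this
      simpa [sq] using this
  obtain ⟨c, hc0, hc1, hc2⟩ := exists_eq_sum_perm_of_mem_doublyStochastic hD
  have e2 : ∀ i j, (W i j) ^ 2 = ∑ σ, c σ * (σ.permMatrix ℝ) i j := by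
    intro i j
    have := congrFun (congrFun hc2 i) j
    rw [Matrix.sum_apply] at this
    simpa using this.symm
  rw [e1]
  calc ∑ i, ∑ j, p i * (W i j) ^ 2 * q j
      = ∑ σ : Equiv.Perm (Fin n), c σ * ∑ i, p i * q (σ i) := by
        simp only [e2, Finset.mul_sum, Finset.sum_mul]
        rw [Finset.sum_comm' (t' := Finset.univ) (s' := fun _ => Finset.univ) (by simp)]
        simp only [Finset.sum_comm (s := (Finset.univ : Finset (Fin n)))
          (t := (Finset.univ : Finset (Equiv.Perm (Fin n))))]
        refine Finset.sum_congr rfl fun σ _ => ?_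
        rw [Finset.sum_comm]
        refine Finset.sum_congr rfl fun i _ => ?_
        rw [Finset.sum_eq_single (σ i)]
        · simp [PEquiv.toMatrix_apply]; ring
        · intro j _ hj
          simp [PEquiv.toMatrix_apply, hj.symm]
        · simp
    _ ≤ ∑ σ : Equiv.Perm (Fin n), c σ * ∑ i, p i * q i := by
        refine Finset.sum_le_sum fun σ _ => mul_le_mul_of_nonneg_left ?_ (hc0 σ)
        exact hpq.sum_mul_comp_perm_le_sum_mul
    _ = ∑ i, p i * q i := by rw [← Finset.sum_mul, hc1, one_mul]

section Bilin
variable {n : ℕ}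

lemma ipM_add_left (A B C : Sym n) : ipM (A + B) C = ipM A C + ipM B C := by
  simp [ipM, Matrix.add_mul]

lemma ipM_add_right (A B C : Sym n) : ipM A (B + C) = ipM A B + ipM A C := by
  simp [ipM, Matrix.mul_add]

lemma ipM_smul_left (t : ℝ) (A B : Sym n) : ipM (t • A) B = t * ipM A B := by
  simp [ipM]

lemma ipM_smul_right (t : ℝ) (A B : Sym n) : ipM A (t • B) = t * ipM A B := by
  simp [ipM]

lemma ipM_comm (A B : Sym n) : ipM A B = ipM B A := by
  rw [ipM, Matrix.trace_mul_comm, ipM]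

lemma ipM_sub_left (A B C : Sym n) : ipM (A - B) C = ipM A C - ipM B C := by
  simp [ipM, Matrix.sub_mul]

lemma ipM_sub_right (A B C : Sym n) : ipM A (B - C) = ipM A B - ipM A C := by
  simp [ipM, Matrix.mul_sub]

lemma ipV_add_left (A B C : Fin n → ℝ) : ipV (A + B) C = ipV A C + ipV B C := by
  simp [ipV, add_mul, Finset.sum_add_distrib]

lemma ipV_add_right (A B C : Fin n → ℝ) : ipV A (B + C) = ipV A B + ipV A C := by
  simp [ipV, mul_add, Finset.sum_add_distrib]

lemma ipV_smul_left (t : ℝ) (A B : Fin n → ℝ) : ipV (t • A) B = t * ipV A B := by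
  simp [ipV, Finset.mul_sum, mul_assoc]

lemma ipV_smul_right (t : ℝ) (A B : Fin n → ℝ) : ipV A (t • B) = t * ipV A B := by
  simp [ipV, Finset.mul_sum, mul_left_comm]

lemma ipV_comm (A B : Fin n → ℝ) : ipV A B = ipV B A := by
  simp [ipV, mul_comm]

lemma ipV_sub_left (A B C : Fin n → ℝ) : ipV (A - B) C = ipV A C - ipV B C := by
  simp [ipV, sub_mul, Finset.sum_sub_distrib]

lemma ipV_sub_right (A B C : Fin n → ℝ) : ipV A (B - C) = ipV A B - ipV A C := by
  simp [ipV, mul_sub, Finset.sum_sub_distrib]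

lemma ipM_diag {U : Matrix (Fin n) (Fin n) ℝ} (hU : U * Uᵀ = 1) {A B : Sym n} {a b : Fin n → ℝ}
    (hA : A.val = U * diagonal a * Uᵀ) (hB : B.val = U * diagonal b * Uᵀ) :
    ipM A B = ipV a b := by
  have hU2 : Uᵀ * U = 1 := mul_eq_one_comm.1 hU
  rw [ipM, hA, hB]
  have : U * diagonal a * Uᵀ * (U * diagonal b * Uᵀ)
      = U * (diagonal a * ((Uᵀ * U) * diagonal b)) * Uᵀ := by simp only [Matrix.mul_assoc]
  rw [this, hU2, Matrix.one_mul, Matrix.trace_mul_comm, ← Matrix.mul_assoc, hU2, Matrix.one_mul,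
    Matrix.diagonal_mul_diagonal, Matrix.trace_diagonal, ipV]

lemma ipM_fan {U V : Matrix (Fin n) (Fin n) ℝ} (hU : U * Uᵀ = 1) (hV : V * Vᵀ = 1)
    {A B : Sym n} {a b : Fin n → ℝ}
    (hA : A.val = U * diagonal a * Uᵀ) (hB : B.val = V * diagonal b * Vᵀ) (h : Monovary b a) :
    ipM A B ≤ ipV a b := by
  rw [ipM, hA, hB, ipV]
  exact fan hU hV h.symm

end Bilin

lemma small_pert {n : ℕ} (x d : Fin n → ℝ) : ∃ s > (0 : ℝ), ∀ t, 0 < t → t < s →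
    ∀ i j, x i < x j → x i + t * d i < x j + t * d j := by
  have h : ∀ᶠ t in 𝓝[>] (0 : ℝ), ∀ i j, x i < x j → x i + t * d i < x j + t * d j := by
    rw [eventually_all]; intro i
    rw [eventually_all]; intro j
    by_cases hij : x i < x j
    · have h1 : Tendsto (fun t : ℝ => x i + t * d i) (𝓝[>] 0) (𝓝 (x i + 0 * d i)) :=
        ((by fun_prop : Continuous fun t : ℝ => x i + t * d i).tendsto 0).mono_left
          nhdsWithin_le_nhds
      have h2 : Tendsto (fun t : ℝ => x j + t * d j) (𝓝[>] 0) (𝓝 (x j + 0 * d j)) :=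
        ((by fun_prop : Continuous fun t : ℝ => x j + t * d j).tendsto 0).mono_left
          nhdsWithin_le_nhds
      filter_upwards [h1.eventually_lt h2 (by simpa using hij)] with t ht _ using ht
    · exact Eventually.of_forall fun t h => absurd h hij
  rw [eventually_nhdsWithin_iff, Metric.eventually_nhds_iff] at h
  obtain ⟨s, hs, h⟩ := h
  refine ⟨s, hs, fun t h0 h1 => h ?_ h0⟩
  rw [Real.dist_eq, sub_zero, abs_of_pos h0]; exact h1

lemma eigval_antitone_s7 {n : ℕ} (K : Sym n) {a c : Fin n} (h : a ≤ c) :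
    eigval K.val c ≤ eigval K.val a := by
  have := Tuple.monotone_sort (fun j => -(isSymm_herm K).eigenvalues j) h
  rw [eigval, dif_pos (isSymm_herm K)]
  simpa using this

lemma exists_monovary {n : ℕ} (Z : Sym n) (b : Fin n → ℝ) :
    ∃ (V : Matrix (Fin n) (Fin n) ℝ) (z : Fin n → ℝ), V * Vᵀ = 1 ∧
      Z.val = V * diagonal z * Vᵀ ∧ Monovary z b := by
  obtain ⟨V, hV, hZ⟩ := eigval_spec Z
  set σ := Tuple.sort (fun j => -b j) with hσ
  refine ⟨V.submatrix id σ.symm, fun i => eigval Z.val (σ.symm i), perm_orth V _ hV, ?_, ?_⟩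
  · rw [perm_conj]; exact hZ
  · intro i j hij
    apply eigval_antitone_s7
    by_contra hlt
    have := Tuple.monotone_sort (fun j => -b j) (not_le.1 hlt).le
    simp only [Function.comp, ← hσ, Equiv.apply_symm_apply] at this
    linarith

lemma lower_pt {n : ℕ} {θ : (Fin n → ℝ) → EReal} (hsym : SymmetricFn θ) {X Y K0 : Sym n}
    {U : Matrix (Fin n) (Fin n) ℝ} (hU : U * Uᵀ = 1) {x y w : Fin n → ℝ}
    (hX : X.val = U * diagonal x * Uᵀ) (hY : Y.val = U * diagonal y * Uᵀ)
    (hK0 : K0.val = U * diagonal w * Uᵀ)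
    (hmono : ∀ i j, x i = x j → 0 ≤ (y i - y j) * (w i - w j)) :
    ∃ M : ℝ, ∃ t0 > (0 : ℝ), ∀ t, 0 < t → t < t0 → ∀ K : Sym n, ∃ v : Fin n → ℝ,
      specFn θ (X + t • K) = θ (x + t • v) ∧ ipV (v - w) (v - w) ≤ ipM (K - K0) (K - K0) ∧
      ipM Y K - ipV y v ≤ M * t * (ipM K K - ipV v v) := by
  obtain ⟨s1, hs1, h1⟩ := small_pert x (fun i => y i + w i)
  obtain ⟨s2, hs2, h2⟩ := small_pert x (fun i => - y i)
  obtain ⟨s3, hs3, h3⟩ := small_pert x (fun i => - w i)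
  have h1 := h1 (s1 / 2) (by linarith) (by linarith)
  have h2 := h2 (s2 / 2) (by linarith) (by linarith)
  set b : Fin n → ℝ := fun i => x i + (s1 / 2) * (y i + w i) with hb
  obtain ⟨s4, hs4, h4⟩ := small_pert x w
  obtain ⟨s5, hs5, h5⟩ := small_pert x y
  set N : ℝ := s5 / 2 with hN
  have hN0 : 0 < N := by linarith
  have h5 := h5 N hN0 (by linarith)
  refine ⟨N⁻¹ / 2, s4, hs4, fun t ht ht4 K => ?_⟩
  have h4 := h4 t ht ht4
  obtain ⟨V, z, hV, hZ, hz⟩ := exists_monovary (X + t • K) b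
  -- orders
  have o1 : Monovary z (x + t • w) := by
    intro i j hij
    apply hz
    simp only [Pi.add_apply, Pi.smul_apply, smul_eq_mul] at hij
    rcases lt_trichotomy (x i) (x j) with h | h | h
    · exact h1 i j h
    · have hw : w i < w j := by
        rw [h] at hij; exact lt_of_mul_lt_mul_left (by linarith) ht.le
      have := hmono i j h
      have hy : y i ≤ y j := by nlinarith
      simp only [hb, h]
      nlinarith
    · exact absurd (h4 j i h) (by linarith)
  have o2 : Monovary z (x + N • y) := by
    intro i j hij
    apply hz
    simp only [Pi.add_apply, Pi.smul_apply, smul_eq_mul] at hij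
    rcases lt_trichotomy (x i) (x j) with h | h | h
    · exact h1 i j h
    · have hy : y i < y j := by
        rw [h] at hij; exact lt_of_mul_lt_mul_left (by linarith) hN0.le
      have := hmono i j h
      have hw : w i ≤ w j := by nlinarith
      simp only [hb, h]
      nlinarith
    · exact absurd (h5 j i h) (by linarith)
  set v : Fin n → ℝ := t⁻¹ • (z - x) with hv
  have hzv : z = x + t • v := by
    rw [hv, smul_smul, mul_inv_cancel₀ ht.ne', one_smul]; abel
  have comb : ∀ (c : ℝ) (A : Sym n) (a : Fin n → ℝ), A.val = U * diagonal a * Uᵀ →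
      (X + c • A).val = U * diagonal (x + c • a) * Uᵀ := by
    intro c A a hA
    have : diagonal (x + c • a) = diagonal x + c • diagonal a := by
      rw [← Matrix.diagonal_smul, Matrix.diagonal_add]; rfl
    rw [this, Matrix.mul_add, Matrix.add_mul, Matrix.mul_smul, Matrix.smul_mul, ← hA, ← hX]
    rfl
  have f1 := ipM_fan hU hV (comb t K0 w hK0) hZ o1
  have f2 := ipM_fan hU hV (comb N Y y hY) hZ o2
  have g1 := ipM_diag hV hZ hZ
  have g2 := ipM_diag hU hX hX
  have g3 := ipM_diag hU hX hK0
  have g4 := ipM_diag hU hK0 hK0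
  have g5 := ipM_diag hU hX hY
  rw [hzv] at f1 f2 g1
  simp only [ipM_add_left, ipM_add_right, ipM_smul_left, ipM_smul_right, ipV_add_left,
    ipV_add_right, ipV_smul_left, ipV_smul_right, ipM_comm K X, ipV_comm v x, ipM_comm K0 X,
    ipM_comm Y X, ipV_comm y x, ipV_comm w x, g2, g3, g5] at f1 f2 g1
  refine ⟨v, ?_, ?_, ?_⟩
  · rw [specFn_conj hsym _ hV hZ, hzv]
  · simp only [ipM_sub_left, ipM_sub_right, ipV_sub_left, ipV_sub_right, ipM_comm K K0,
      ipV_comm v w, g4]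
    have e : 2 * (ipM X K - ipV x v) = t * (ipV v v - ipM K K) := by
      apply mul_left_cancel₀ ht.ne'; linarith
    have e2 : t * (ipM X K - ipV x v + t * (ipM K0 K - ipV w v)) ≤ 0 := by linarith
    have e3 : ipM X K - ipV x v + t * (ipM K0 K - ipV w v) ≤ 0 := by
      by_contra hc; push Not at hc; nlinarith
    have e4 : t * (ipV v v - ipM K K + 2 * (ipM K0 K - ipV w v)) ≤ 0 := by linarith
    have e5 : ipV v v - ipM K K + 2 * (ipM K0 K - ipV w v) ≤ 0 := by
      by_contra hc; push Not at hc; nlinarith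
    linarith
  · have e : 2 * (ipM X K - ipV x v) = t * (ipV v v - ipM K K) := by
      apply mul_left_cancel₀ ht.ne'; linarith
    have e2 : t * (ipM X K - ipV x v + N * (ipM Y K - ipV y v)) ≤ 0 := by linarith
    have e3 : ipM X K - ipV x v + N * (ipM Y K - ipV y v) ≤ 0 := by
      by_contra hc; push Not at hc; nlinarith
    have e4 : N * (ipM Y K - ipV y v) ≤ t / 2 * (ipM K K - ipV v v) := by linarith
    calc ipM Y K - ipV y v = N⁻¹ * (N * (ipM Y K - ipV y v)) := by
          rw [← mul_assoc, inv_mul_cancel₀ hN0.ne', one_mul]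
      _ ≤ N⁻¹ * (t / 2 * (ipM K K - ipV v v)) :=
          mul_le_mul_of_nonneg_left e4 (inv_pos.2 hN0).le
      _ = _ := by ring

section ExpSec
attribute [local instance] Matrix.linftyOpNormedRing Matrix.linftyOpNormedAlgebra

lemma exp_curve {n : ℕ} (A : Matrix (Fin n) (Fin n) ℝ) (hA : Aᵀ = -A) :
    ∃ E : ℝ → Matrix (Fin n) (Fin n) ℝ, Tendsto E (𝓝[>] 0) (𝓝 A) ∧
      ∀ t, 0 < t → (1 + t • E t) * (1 + t • E t)ᵀ = 1 ∧
        ∀ S, S * A = A * S → S * (1 + t • E t) = (1 + t • E t) * S := by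
  have hR : ∀ t : ℝ, 0 < t →
      1 + t • (t⁻¹ • (NormedSpace.exp (t • A) - 1)) = NormedSpace.exp (t • A) := by
    intro t ht
    rw [smul_smul, mul_inv_cancel₀ ht.ne', one_smul]; abel
  refine ⟨fun t => t⁻¹ • (NormedSpace.exp (t • A) - 1), ?_, fun t ht => ?_⟩
  · have h := hasDerivAt_exp_smul_const (𝕂 := ℝ) A (0 : ℝ)
    rw [hasDerivAt_iff_tendsto_slope] at h
    have h2 := h.mono_left (nhdsWithin_mono 0
      (fun t (ht : t ∈ Set.Ioi (0 : ℝ)) => ne_of_gt (Set.mem_Ioi.1 ht)))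
    simp only [zero_smul, NormedSpace.exp_zero, one_mul] at h2
    refine h2.congr fun t => ?_
    simp [slope_def_module]
    try rfl
  · simp only [hR t ht]
    constructor
    · rw [← Matrix.exp_transpose, Matrix.transpose_smul, hA, smul_neg,
        Matrix.exp_neg]
      exact Matrix.mul_nonsing_inv _ ((Matrix.isUnit_iff_isUnit_det _).1 (Matrix.isUnit_exp _))
    · intro S hS
      have : Commute S A := hS
      exact ((this.smul_right t).exp_right)
end ExpSec

lemma block_diag_spectral {n : ℕ} {κ : Type*} [Fintype κ] [DecidableEq κ] (c : Fin n → κ)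
    (S : Matrix (Fin n) (Fin n) ℝ) (hS : Sᵀ = S) (h0 : ∀ i j, c i ≠ c j → S i j = 0) :
    ∃ (V : Matrix (Fin n) (Fin n) ℝ) (w : Fin n → ℝ), V * Vᵀ = 1 ∧
      S = V * diagonal w * Vᵀ ∧ ∀ i j, c i ≠ c j → V i j = 0 := by
  have hB : ∀ k, (S.submatrix (fun i : {i // c i = k} => i.1) (fun i => i.1)).IsHermitian := by
    intro k
    rw [Matrix.IsHermitian, Matrix.conjTranspose_eq_transpose_of_trivial,
      Matrix.transpose_submatrix, hS]
  choose V hV1 hV2 using fun k => spectral_real (hB k)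
  set e := (Equiv.sigmaFiberEquiv c).symm with he
  have hc : ∀ i, (e i).1 = c i := fun i => rfl
  set V0 := blockDiagonal' V
  set w0 : (Σ k, {i // c i = k}) → ℝ := fun p => (hB p.1).eigenvalues p.2
  have hV0 : V0 * V0ᵀ = 1 := by
    rw [Matrix.blockDiagonal'_transpose, ← Matrix.blockDiagonal'_mul]
    simp only [hV1]
    exact Matrix.blockDiagonal'_one
  have hS0 : S = (V0 * diagonal w0 * V0ᵀ).submatrix e e := by
    have : diagonal w0 = blockDiagonal' fun k => diagonal (hB k).eigenvalues :=
      
      (Matrix.blockDiagonal'_diagonal (fun k => (hB k).eigenvalues)).symm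
    rw [this, Matrix.blockDiagonal'_transpose, ← Matrix.blockDiagonal'_mul,
      ← Matrix.blockDiagonal'_mul]
    simp only [← hV2]
    ext i j
    rw [Matrix.submatrix_apply]
    by_cases hij : c i = c j
    · have : ∀ k (a b : {i // c i = k}), S a.1 b.1
        = (blockDiagonal' fun k => S.submatrix (fun i : {i // c i = k} => i.1)
            (fun i : {i // c i = k} => i.1))
          ⟨k, a⟩ ⟨k, b⟩ := by
        intro k a b
        rw [Matrix.blockDiagonal'_apply_eq]; rfl
      have h1 := this (c j) ⟨i, hij⟩ ⟨j, rfl⟩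
      rw [h1]
      congr 1
      exact Sigma.ext hij.symm (by 
        rw [Subtype.heq_iff_coe_eq]; rfl
        intro x; rw [hc i, hij])
    · rw [h0 i j hij]
      symm
      exact Matrix.blockDiagonal'_apply_ne _ _ _ hij
  refine ⟨V0.submatrix e e, fun i => w0 (e i), ?_, ?_, ?_⟩
  · rw [Matrix.transpose_submatrix, Matrix.submatrix_mul_equiv, hV0, Matrix.submatrix_one_equiv]
  · rw [hS0, Matrix.transpose_submatrix]
    have : diagonal (fun i => w0 (e i)) = (diagonal w0).submatrix e e := by
      rw [Matrix.submatrix_diagonal_equiv]; rfl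
    rw [this, Matrix.submatrix_mul_equiv, Matrix.submatrix_mul_equiv]
  · intro i j hij
    exact Matrix.blockDiagonal'_apply_ne V (e i).2 (e j).2 hij

section ERealPart

lemma er_shift {s : ℝ} (hs : 0 < s) (p : EReal) (a b b' : ℝ) :
    (s : EReal) * (p - a - b) = (s : EReal) * (p - a - b') + ((s * (b' - b) : ℝ) : EReal) := by
  induction p with
  | bot => simp [EReal.coe_mul_bot_of_pos hs]
  | top =>
    rw [EReal.top_sub_coe, EReal.top_sub_coe, EReal.top_sub_coe, EReal.coe_mul_top_of_pos hs,
      EReal.top_add_coe]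
  | coe p => norm_cast; ring

lemma er_lower {s : ℝ} (hs : 0 < s) {p : EReal} {a b q : ℝ} (h : (q : EReal) ≤ p) :
    ((s * (q - a - b) : ℝ) : EReal) ≤ (s : EReal) * (p - a - b) := by
  induction p with
  | bot => simp at h
  | top => simp [EReal.coe_mul_top_of_pos hs]
  | coe p =>
    norm_cast at h ⊢
    exact mul_le_mul_of_nonneg_left (by linarith) hs.le

lemma liminf_transfer {α β : Type*} {F : Filter α} {G : Filter β} [NeBot F] {f1 : α → EReal}
    {f2 : β → EReal}
    {m : α → β} {e : α → ℝ} {c : ℝ} (hm : Tendsto m F G) (he : Tendsto e F (𝓝 c))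
    (h : ∀ᶠ p in F, f2 (m p) + ((e p : ℝ) : EReal) ≤ f1 p) :
    liminf f2 G + (c : EReal) ≤ liminf f1 F := by
  have h1 : liminf f2 G ≤ liminf (fun p => f2 (m p)) F := by
    have : liminf (fun p => f2 (m p)) F = liminf f2 (map m F) := rfl
    rw [this]
    exact liminf_le_liminf_of_le hm
  have h2 : liminf (fun p => ((e p : ℝ) : EReal)) F = (c : EReal) :=
    ((continuous_coe_real_ereal.tendsto c).comp he).liminf_eq
  calc liminf f2 G + (c : EReal)
      ≤ liminf (fun p => f2 (m p)) F + liminf (fun p => ((e p : ℝ) : EReal)) F := by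
        rw [h2]; exact add_le_add_left h1 _
    _ ≤ liminf ((fun p => f2 (m p)) + fun p => ((e p : ℝ) : EReal)) F := EReal.le_liminf_add
    _ ≤ liminf f1 F := liminf_le_liminf h

lemma tendsto_add_coe {α : Type*} {F : Filter α} {f : α → EReal} {e : α → ℝ} {c : ℝ} {l : EReal}
    (hf : Tendsto f F (𝓝 l)) (he : Tendsto e F (𝓝 c)) :
    Tendsto (fun p => f p + ((e p : ℝ) : EReal)) F (𝓝 (l + (c : EReal))) := by
  have h : ContinuousAt (fun p : EReal × EReal => p.1 + p.2) (l, (c : EReal)) :=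
    EReal.continuousAt_add (Or.inr (EReal.coe_ne_bot c)) (Or.inr (EReal.coe_ne_top c))
  have h2 := (continuous_coe_real_ereal.tendsto c).comp he
  exact Tendsto.comp (y := 𝓝 (l, (c : EReal))) h (hf.prodMk_nhds h2)

end ERealPart

section Conj
variable {n : ℕ}

/-- conjugation of a symmetric matrix -/
def cj (R : Matrix (Fin n) (Fin n) ℝ) (K : Sym n) : Sym n :=
  ⟨R * K.val * Rᵀ, by
    change (R * K.val * Rᵀ)ᵀ = R * K.val * Rᵀ
    rw [Matrix.transpose_mul, Matrix.transpose_mul, symT, Matrix.transpose_transpose,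
      Matrix.mul_assoc]⟩

lemma cj_val (R : Matrix (Fin n) (Fin n) ℝ) (K : Sym n) : (cj R K).val = R * K.val * Rᵀ := rfl

lemma specFn_cj {θ : (Fin n → ℝ) → EReal} (hsym : SymmetricFn θ)
    {R : Matrix (Fin n) (Fin n) ℝ} (hR : R * Rᵀ = 1) (K : Sym n) :
    specFn θ (cj R K) = specFn θ K := by
  obtain ⟨V, hV, hK⟩ := eigval_spec K
  rw [specFn_conj hsym (cj R K) (V := R * V) (z := eigval K.val)]
  · rfl
  · rw [Matrix.transpose_mul, Matrix.mul_assoc, ← Matrix.mul_assoc V, hV, Matrix.one_mul, hR]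
  · rw [cj_val, Matrix.transpose_mul]
    nth_rewrite 1 [hK]
    simp only [Matrix.mul_assoc]

lemma ipM_self (A : Sym n) : ipM A A = ∑ i, ∑ j, (A.val i j) ^ 2 := by
  rw [ipM, Matrix.trace]
  refine Finset.sum_congr rfl fun i _ => ?_
  rw [Matrix.diag_apply, Matrix.mul_apply]
  refine Finset.sum_congr rfl fun j _ => ?_
  have : A.val j i = A.val i j := congrFun (congrFun (symT A) i) j
  rw [this, sq]

lemma ipM_pos {A : Sym n} (h : A ≠ 0) : 0 < ipM A A := by
  rw [ipM_self]
  by_contra hc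
  apply h
  have h0 : ∑ i, ∑ j, (A.val i j) ^ 2 = 0 := le_antisymm (not_lt.1 hc) (by positivity)
  ext i j
  rw [Finset.sum_eq_zero_iff_of_nonneg (fun i _ => by positivity)] at h0
  have h1 := h0 i (Finset.mem_univ _)
  rw [Finset.sum_eq_zero_iff_of_nonneg (fun i _ => by positivity)] at h1
  simpa using h1 j (Finset.mem_univ _)

lemma ipM_cont {α : Type*} [TopologicalSpace α] {f g : α → Sym n} (hf : Continuous f)
    (hg : Continuous g) : Continuous fun a => ipM (f a) (g a) := by
  unfold ipM
  exact ((continuous_subtype_val.comp hf).matrix_mul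
    (continuous_subtype_val.comp hg)).matrix_trace

lemma cj_cont (R : Matrix (Fin n) (Fin n) ℝ) : Continuous (cj R) := by
  refine Continuous.subtype_mk ?_ _
  exact (continuous_const.matrix_mul continuous_subtype_val).matrix_mul continuous_const

lemma cj_add_smul (R : Matrix (Fin n) (Fin n) ℝ) (A B : Sym n) (t : ℝ) :
    cj R (A + t • B) = cj R A + t • cj R B := by
  apply Subtype.ext
  simp [cj_val, Matrix.mul_add, Matrix.add_mul]

lemma reg_lower {f : Sym n → EReal} {X Y : Sym n} {a : ℝ} (ha : f X = a)
    (hY : RegSubgrad ipM f X Y) {ε : ℝ} (hε : 0 < ε) :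
    ∀ᶠ Z in 𝓝 X, ((a + ipM Y (Z - X) - ε * nrm ipM (Z - X) : ℝ) : EReal) ≤ f Z := by
  have h := hY.2
  have h1 : ((-ε : ℝ) : EReal) < liminf (fun y : Sym n =>
      (((nrm ipM (y - X))⁻¹ : ℝ) : EReal) * (f y - f X - ((ipM Y (y - X) : ℝ) : EReal)))
      (nhdsWithin X {X}ᶜ) := lt_of_lt_of_le (by exact_mod_cast neg_lt_zero.2 hε) h
  have h2 := eventually_lt_of_lt_liminf h1
  rw [eventually_nhdsWithin_iff] at h2
  filter_upwards [h2] with Z hZ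
  by_cases hZX : Z = X
  · subst hZX
    rw [ha]
    norm_cast
    have h0 : ipM Y (0 : Sym n) = 0 := by simp [ipM]
    have : 0 ≤ nrm ipM (0 : Sym n) := Real.sqrt_nonneg _
    rw [sub_self, h0]
    nlinarith
  · have hZ := hZ hZX
    have hpos : 0 < nrm ipM (Z - X) := Real.sqrt_pos.2 (ipM_pos (sub_ne_zero.2 hZX))
    rw [ha] at hZ
    induction hp : f Z with
    | bot =>
      rw [hp] at hZ
      simp [EReal.coe_mul_bot_of_pos (inv_pos.2 hpos)] at hZ
    | top => exact le_top
    | coe p =>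
      rw [hp] at hZ
      norm_cast at hZ ⊢
      rw [inv_mul_eq_div, lt_div_iff₀ hpos] at hZ
      linarith

lemma bad_top {θ : (Fin n → ℝ) → EReal} (hsym : SymmetricFn θ) {X Y H : Sym n}
    {Q : Matrix (Fin n) (Fin n) ℝ} (hY : RegSubgrad ipM (specFn θ) X Y) (hQ : Q * Qᵀ = 1)
    (hQX : Q * X.val = X.val * Q) (hgt : ipM Y H < ipM Y (cj Q H)) :
    subderiv2 ipM (specFn θ) X Y H = ⊤ := by
  obtain ⟨a, ha⟩ : ∃ a : ℝ, specFn θ X = a :=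
    ⟨(specFn θ X).toReal, (EReal.coe_toReal hY.1.1 hY.1.2).symm⟩
  have hcX : cj Q X = X := by
    apply Subtype.ext
    rw [cj_val, hQX, Matrix.mul_assoc, hQ, Matrix.mul_one]
  set δ := ipM Y (cj Q H) - ipM Y H with hδ
  have hδ0 : 0 < δ := by linarith
  set N := nrm ipM (cj Q H) with hN
  have hN0 : 0 ≤ N := Real.sqrt_nonneg _
  set ε := δ / (2 * (N + 1)) with hεd
  have hε : 0 < ε := by positivity
  have hεN : ε * N < δ := by
    rw [hεd, div_mul_eq_mul_div, div_lt_iff₀ (by positivity)]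
    nlinarith
  set F := (𝓝[>] (0 : ℝ)) ×ˢ 𝓝 H with hF
  have hfst : Tendsto (fun p : ℝ × Sym n => p.1) F (𝓝[>] 0) := tendsto_fst
  have hsnd : Tendsto (fun p : ℝ × Sym n => p.2) F (𝓝 H) := tendsto_snd
  have hfst0 : Tendsto (fun p : ℝ × Sym n => p.1) F (𝓝 0) := hfst.mono_right nhdsWithin_le_nhds
  have hpos : ∀ᶠ p in F, 0 < p.1 := hfst.eventually self_mem_nhdsWithin
  have hZ : Tendsto (fun p : ℝ × Sym n => X + p.1 • cj Q p.2) F (𝓝 X) := by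
    have : Tendsto (fun p : ℝ × Sym n => X + p.1 • cj Q p.2) F (𝓝 (X + (0 : ℝ) • cj Q H)) :=
      tendsto_const_nhds.add (hfst0.smul (((cj_cont Q).tendsto H).comp hsnd))
    simpa using this
  have hreg := hZ.eventually (reg_lower ha hY hε)
  have hlim : Tendsto (fun p : ℝ × Sym n => (2 * p.1⁻¹) *
      (ipM Y (cj Q p.2) - ipM Y p.2 - ε * nrm ipM (cj Q p.2))) F atTop := by
    have hc : Continuous fun L : Sym n => ipM Y (cj Q L) - ipM Y L - ε * nrm ipM (cj Q L) := by
      unfold nrm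
      exact ((ipM_cont continuous_const (cj_cont Q)).sub
        (ipM_cont continuous_const continuous_id)).sub
        (continuous_const.mul (ipM_cont (cj_cont Q) (cj_cont Q)).sqrt)
    have h1 := (hc.tendsto H).comp hsnd
    refine Tendsto.atTop_mul_pos (C := ipM Y (cj Q H) - ipM Y H - ε * nrm ipM (cj Q H))
      ?_ ?_ h1
    · rw [← hδ, ← hN]; linarith
    · exact (tendsto_inv_nhdsGT_zero.comp hfst).const_mul_atTop (by norm_num)
  rw [EReal.eq_top_iff_forall_lt]
  intro C
  refine lt_of_lt_of_le (b := ((C + 1 : ℝ) : EReal)) (by exact_mod_cast lt_add_one C) ?_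
  refine le_liminf_of_le (by isBoundedDefault) ?_
  filter_upwards [hpos, hreg, hlim.eventually_ge_atTop (C + 1)] with p hp0 hp1 hp2
  have e1 : specFn θ (X + p.1 • cj Q p.2) = specFn θ (X + p.1 • p.2) := by
    rw [← specFn_cj hsym hQ (X + p.1 • p.2), cj_add_smul, hcX]
  rw [e1] at hp1
  have hs : 0 < 2 / p.1 ^ 2 := by positivity
  have := er_lower hs (a := a) (b := p.1 * ipM Y p.2) hp1
  rw [sdq2, ha]
  refine le_trans ?_ this
  norm_cast
  refine hp2.trans (le_of_eq ?_)
  have e2 : nrm ipM (p.1 • cj Q p.2) = p.1 * nrm ipM (cj Q p.2) := by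
    rw [nrm, nrm, ipM_smul_left, ipM_smul_right, ← mul_assoc, Real.sqrt_mul (by positivity),
      Real.sqrt_mul_self hp0.le]
  rw [add_sub_cancel_left, ipM_smul_right, e2]
  field_simp
  ring

end Conj

section Transport
variable {n : ℕ}

/-- the curve transport map -/
def trF (X : Sym n) (R : Matrix (Fin n) (Fin n) ℝ) (t : ℝ) (K : Sym n) : Sym n :=
  t⁻¹ • (cj R (X + t • K) - X)

lemma trF_add (X : Sym n) (R : Matrix (Fin n) (Fin n) ℝ) {t : ℝ} (ht : 0 < t) (K : Sym n) :
    X + t • trF X R t K = cj R (X + t • K) := by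
  rw [trF, smul_smul, mul_inv_cancel₀ ht.ne', one_smul]; abel

lemma cj_cj {R : Matrix (Fin n) (Fin n) ℝ} (hR : R * Rᵀ = 1) (K : Sym n) :
    cj R (cj Rᵀ K) = K := by
  apply Subtype.ext
  rw [cj_val, cj_val, Matrix.transpose_transpose]
  calc R * (Rᵀ * K.val * R) * Rᵀ = (R * Rᵀ) * K.val * (R * Rᵀ) := by simp only [Matrix.mul_assoc]
    _ = K.val := by rw [hR, Matrix.one_mul, Matrix.mul_one]

lemma trF_trF (X : Sym n) {R : Matrix (Fin n) (Fin n) ℝ} (hR : R * Rᵀ = 1) {t : ℝ} (ht : 0 < t)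
    (L : Sym n) : trF X R t (trF X Rᵀ t L) = L := by
  rw [trF, trF_add X Rᵀ ht, cj_cj hR, add_sub_cancel_left, smul_smul, inv_mul_cancel₀ ht.ne',
    one_smul]

lemma trF_val (X : Sym n) (E : Matrix (Fin n) (Fin n) ℝ) {t : ℝ} (ht : 0 < t) (K : Sym n) :
    (trF X (1 + t • E) t K).val = E * X.val + X.val * Eᵀ + t • (E * X.val * Eᵀ)
      + (1 + t • E) * K.val * (1 + t • E)ᵀ := by
  have h : (1 + t • E) * X.val * (1 + t • E)ᵀ - X.val
      = t • (E * X.val + X.val * Eᵀ + t • (E * X.val * Eᵀ)) := by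
    rw [Matrix.transpose_add, Matrix.transpose_one, Matrix.transpose_smul]
    simp only [Matrix.add_mul, Matrix.mul_add, Matrix.one_mul, Matrix.mul_one, Matrix.smul_mul,
      Matrix.mul_smul, smul_add]
    abel
  have h2 : (trF X (1 + t • E) t K).val = t⁻¹ • ((1 + t • E) * X.val * (1 + t • E)ᵀ - X.val)
      + (1 + t • E) * K.val * (1 + t • E)ᵀ := by
    have : (trF X (1 + t • E) t K).val
        = t⁻¹ • ((1 + t • E) * (X.val + t • K.val) * (1 + t • E)ᵀ - X.val) := rfl
    rw [this, Matrix.mul_add, Matrix.add_mul, Matrix.mul_smul (1 + t • E), Matrix.smul_mul t,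
      add_sub_right_comm, smul_add, smul_smul, inv_mul_cancel₀ ht.ne', one_smul]
  rw [h2, h, smul_smul, inv_mul_cancel₀ ht.ne', one_smul]

lemma trF_tendsto {X H0 H : Sym n} {E : ℝ → Matrix (Fin n) (Fin n) ℝ}
    {A : Matrix (Fin n) (Fin n) ℝ} (hE : Tendsto E (𝓝[>] 0) (𝓝 A))
    (hH : H.val = A * X.val + X.val * Aᵀ + H0.val) :
    Tendsto (fun p : ℝ × Sym n => trF X (1 + p.1 • E p.1) p.1 p.2) (𝓝[>] 0 ×ˢ 𝓝 H0) (𝓝 H) := by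
  rw [tendsto_subtype_rng]
  have hc : Continuous fun q : ℝ × Matrix (Fin n) (Fin n) ℝ × Sym n =>
      q.2.1 * X.val + X.val * q.2.1ᵀ + q.1 • (q.2.1 * X.val * q.2.1ᵀ)
        + (1 + q.1 • q.2.1) * q.2.2.val * (1 + q.1 • q.2.1)ᵀ := by
    fun_prop
  have hfst : Tendsto (fun p : ℝ × Sym n => p.1) (𝓝[>] 0 ×ˢ 𝓝 H0) (𝓝[>] 0) := tendsto_fst
  have hsnd : Tendsto (fun p : ℝ × Sym n => p.2) (𝓝[>] (0 : ℝ) ×ˢ 𝓝 H0) (𝓝 H0) := tendsto_snd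
  have h := (hc.tendsto (0, A, H0)).comp
    ((hfst.mono_right nhdsWithin_le_nhds).prodMk_nhds ((hE.comp hfst).prodMk_nhds hsnd))
  have hlim : A * X.val + X.val * Aᵀ + (0 : ℝ) • (A * X.val * Aᵀ)
        + (1 + (0 : ℝ) • A) * H0.val * (1 + (0 : ℝ) • A)ᵀ = H.val := by
    rw [hH]; simp
  simp only [hlim] at h
  refine h.congr' ?_
  filter_upwards [hfst.eventually self_mem_nhdsWithin] with p hp
  exact (trF_val X (E p.1) hp p.2).symm

lemma trF_ip {X Y : Sym n} (hYX : Y.val * X.val = X.val * Y.val)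
    {E : ℝ → Matrix (Fin n) (Fin n) ℝ} {H0 : Sym n}
    {A : Matrix (Fin n) (Fin n) ℝ} (hE : Tendsto E (𝓝[>] 0) (𝓝 A))
    (hO : ∀ t, 0 < t → (1 + t • E t) * (1 + t • E t)ᵀ = 1) :
    ∃ c : ℝ, Tendsto (fun p : ℝ × Sym n =>
      2 / p.1 * (ipM Y p.2 - ipM Y (trF X (1 + p.1 • E p.1) p.1 p.2)))
      (𝓝[>] 0 ×ˢ 𝓝 H0) (𝓝 c) := by
  have hc : Continuous fun q : ℝ × Matrix (Fin n) (Fin n) ℝ × Sym n =>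
      -(2 * ((Y.val * (q.2.1 * X.val * q.2.1ᵀ)).trace
        - (X.val * Y.val * (q.2.1 * q.2.1ᵀ)).trace
        + (Y.val * (q.2.1 * q.2.2.val)).trace + (Y.val * (q.2.2.val * q.2.1ᵀ)).trace
        + q.1 * (Y.val * (q.2.1 * q.2.2.val * q.2.1ᵀ)).trace)) := by
    fun_prop
  have hfst : Tendsto (fun p : ℝ × Sym n => p.1) (𝓝[>] 0 ×ˢ 𝓝 H0) (𝓝[>] 0) := tendsto_fst
  have hsnd : Tendsto (fun p : ℝ × Sym n => p.2) (𝓝[>] (0 : ℝ) ×ˢ 𝓝 H0) (𝓝 H0) := tendsto_snd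
  have h := (hc.tendsto (0, A, H0)).comp
    ((hfst.mono_right nhdsWithin_le_nhds).prodMk_nhds ((hE.comp hfst).prodMk_nhds hsnd))
  refine ⟨_, h.congr' ?_⟩
  filter_upwards [hfst.eventually self_mem_nhdsWithin] with p hp
  have ht : 0 < p.1 := hp
  obtain ⟨t, K⟩ := p
  simp only [Function.comp] at ht ⊢
  have hO := hO t ht
  generalize E t = B at hO ⊢
  have hO2 : B + Bᵀ = -(t • (B * Bᵀ)) := by
    rw [Matrix.transpose_add, Matrix.transpose_one, Matrix.transpose_smul] at hO
    simp only [Matrix.add_mul, Matrix.mul_add, Matrix.one_mul, Matrix.mul_one, Matrix.smul_mul,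
      Matrix.mul_smul] at hO
    have h3 : t • (B + Bᵀ + t • (B * Bᵀ)) = 0 := by
      have h4 : t • (B + Bᵀ + t • (B * Bᵀ)) = (1 + t • B + (t • Bᵀ + t • t • (B * Bᵀ))) - 1 := by
        simp only [smul_add]; abel
      rw [h4]
      have h5 : (1 + t • B + (t • Bᵀ + t • t • (B * Bᵀ))) = 1 := by
        rw [← smul_add]; exact hO
      rw [h5, sub_self]
    have h6 := (smul_eq_zero.1 h3).resolve_left ht.ne'
    exact eq_neg_of_add_eq_zero_left h6
  have e1 : (Y.val * (B * X.val)).trace + (Y.val * (X.val * Bᵀ)).trace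
      = - (t * (X.val * Y.val * (B * Bᵀ)).trace) := by
    have : (Y.val * (B * X.val)).trace = (X.val * Y.val * B).trace := by
      rw [← Matrix.mul_assoc, Matrix.trace_mul_comm, Matrix.mul_assoc]
    rw [this, ← Matrix.mul_assoc, hYX, ← Matrix.trace_add, ← Matrix.mul_add, hO2]
    simp
  have e2 : ipM Y (trF X (1 + t • B) t K) =
      (Y.val * (B * X.val)).trace + (Y.val * (X.val * Bᵀ)).trace
      + t * (Y.val * (B * X.val * Bᵀ)).trace
      + (ipM Y K + t * (Y.val * (B * K.val)).trace + t * (Y.val * (K.val * Bᵀ)).trace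
        + t * t * (Y.val * (B * K.val * Bᵀ)).trace) := by
    rw [ipM, trF_val X B ht, ipM]
    rw [Matrix.transpose_add, Matrix.transpose_one, Matrix.transpose_smul]
    simp only [Matrix.add_mul, Matrix.mul_add, Matrix.one_mul, Matrix.mul_one, Matrix.smul_mul,
      Matrix.mul_smul, Matrix.trace_add, Matrix.trace_smul, smul_eq_mul]
    ring
  rw [e2, e1]
  field_simp
  ring

lemma sdq_trF {θ : (Fin n → ℝ) → EReal} (hsym : SymmetricFn θ) {X Y : Sym n} {a : ℝ}
    (ha : specFn θ X = a) {R : Matrix (Fin n) (Fin n) ℝ} (hR : R * Rᵀ = 1) {t : ℝ} (ht : 0 < t)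
    (K : Sym n) :
    sdq2 ipM (specFn θ) X Y t (trF X R t K) = sdq2 ipM (specFn θ) X Y t K
      + ((2 / t * (ipM Y K - ipM Y (trF X R t K)) : ℝ) : EReal) := by
  have hs : 0 < 2 / t ^ 2 := by positivity
  rw [sdq2, trF_add X R ht, specFn_cj hsym hR, ha,
    er_shift hs _ a (t * ipM Y (trF X R t K)) (t * ipM Y K), sdq2, ha]
  congr 2
  field_simp

lemma transport {θ : (Fin n → ℝ) → EReal} (hsym : SymmetricFn θ) {X Y H0 H : Sym n}
    (hfin : IsFiniteAt (specFn θ) X) (hYX : Y.val * X.val = X.val * Y.val)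
    {A : Matrix (Fin n) (Fin n) ℝ} (hA : Aᵀ = -A)
    (hH : H.val = H0.val + (A * X.val - X.val * A)) :
    ∃ (c : ℝ) (Φ : ℝ × Sym n → Sym n) (e : ℝ × Sym n → ℝ),
      subderiv2 ipM (specFn θ) X Y H = subderiv2 ipM (specFn θ) X Y H0 + (c : EReal) ∧
      Tendsto Φ (𝓝[>] 0 ×ˢ 𝓝 H0) (𝓝 H) ∧ Tendsto e (𝓝[>] 0 ×ˢ 𝓝 H0) (𝓝 c) ∧
      ∀ t K, 0 < t → sdq2 ipM (specFn θ) X Y t (Φ (t, K)) =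
        sdq2 ipM (specFn θ) X Y t K + ((e (t, K) : ℝ) : EReal) := by
  obtain ⟨a, ha⟩ : ∃ a : ℝ, specFn θ X = a :=
    ⟨(specFn θ X).toReal, (EReal.coe_toReal hfin.1 hfin.2).symm⟩
  obtain ⟨E, hE, hO⟩ := exp_curve A hA
  have hET : Tendsto (fun t => (E t)ᵀ) (𝓝[>] 0) (𝓝 Aᵀ) :=
    ((continuous_id.matrix_transpose).tendsto A).comp hE
  obtain ⟨c, hc⟩ := trF_ip (H0 := H0) hYX hE (fun t ht => (hO t ht).1)
  have hΦ : Tendsto (fun p : ℝ × Sym n => trF X (1 + p.1 • E p.1) p.1 p.2)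
      (𝓝[>] 0 ×ˢ 𝓝 H0) (𝓝 H) := by
    refine trF_tendsto (E := E) (A := A) hE ?_
    rw [hH, hA, Matrix.mul_neg]; abel
  have hΨ : Tendsto (fun p : ℝ × Sym n => trF X (1 + p.1 • (E p.1)ᵀ) p.1 p.2)
      (𝓝[>] 0 ×ˢ 𝓝 H) (𝓝 H0) := by
    refine trF_tendsto (E := fun t => (E t)ᵀ) (A := Aᵀ) hET ?_
    rw [hH, Matrix.transpose_transpose, hA, Matrix.neg_mul]; abel
  have hfst : ∀ K0 : Sym n, Tendsto (fun p : ℝ × Sym n => p.1) (𝓝[>] 0 ×ˢ 𝓝 K0) (𝓝[>] 0) :=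
    fun _ => tendsto_fst
  have key : ∀ t K, 0 < t → sdq2 ipM (specFn θ) X Y t (trF X (1 + t • E t) t K) =
        sdq2 ipM (specFn θ) X Y t K
          + ((2 / t * (ipM Y K - ipM Y (trF X (1 + t • E t) t K)) : ℝ) : EReal) :=
    fun t K ht => sdq_trF hsym ha (hO t ht).1 ht K
  refine ⟨c, fun p => trF X (1 + p.1 • E p.1) p.1 p.2,
    fun p => 2 / p.1 * (ipM Y p.2 - ipM Y (trF X (1 + p.1 • E p.1) p.1 p.2)), ?_, hΦ, hc, key⟩
  apply le_antisymm
  · have h1 : subderiv2 ipM (specFn θ) X Y H + ((-c : ℝ) : EReal)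
        ≤ subderiv2 ipM (specFn θ) X Y H0 := by
      refine liminf_transfer ((hfst H0).prodMk hΦ) hc.neg ?_
      filter_upwards [(hfst H0).eventually self_mem_nhdsWithin] with p hp
      rw [key p.1 p.2 hp, add_assoc, ← EReal.coe_add, add_neg_cancel, EReal.coe_zero, add_zero]
    calc subderiv2 ipM (specFn θ) X Y H
        = subderiv2 ipM (specFn θ) X Y H + ((-c : ℝ) : EReal) + (c : EReal) := by
          rw [add_assoc, ← EReal.coe_add, neg_add_cancel, EReal.coe_zero, add_zero]
      _ ≤ _ := add_le_add_left h1 _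
  · refine liminf_transfer ((hfst H).prodMk hΨ) (hc.comp ((hfst H).prodMk hΨ)) ?_
    filter_upwards [(hfst H).eventually self_mem_nhdsWithin] with p hp
    have hT : (1 + p.1 • E p.1)ᵀ = 1 + p.1 • (E p.1)ᵀ := by
      rw [Matrix.transpose_add, Matrix.transpose_one, Matrix.transpose_smul]
    have h2 := key p.1 (trF X (1 + p.1 • (E p.1)ᵀ) p.1 p.2) hp
    rw [← hT, trF_trF X (hO p.1 hp).1 hp] at h2
    simp only [Function.comp]
    rw [← hT, trF_trF X (hO p.1 hp).1 hp]
    exact h2.ge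

end Transport

section Main
variable {n : ℕ}

lemma top_seq {E : Type*} [AddCommGroup E] [Module ℝ E] [TopologicalSpace E]
    {ip : E → E → ℝ} {f : E → EReal} {x v w : E} (h : subderiv2 ip f x v w = ⊤)
    {t : ℕ → ℝ} (ht : Tendsto t atTop (𝓝[>] 0)) :
    Tendsto (fun k => sdq2 ip f x v (t k) w) atTop (𝓝 ⊤) := by
  have h2 : Tendsto (fun k => (t k, w)) atTop (𝓝[>] (0 : ℝ) ×ˢ 𝓝 w) :=
    ht.prodMk tendsto_const_nhds
  have h3 : (⊤ : EReal) ≤ liminf (fun k => sdq2 ip f x v (t k) w) atTop := by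
    have h4 := liminf_transfer (F := (atTop : Filter ℕ)) (G := 𝓝[>] (0 : ℝ) ×ˢ 𝓝 w)
      (f1 := fun k => sdq2 ip f x v (t k) w)
      (f2 := fun p : ℝ × E => sdq2 ip f x v p.1 p.2)
      (m := fun k => (t k, w)) (e := fun _ => 0) (c := 0) h2 tendsto_const_nhds
      (Eventually.of_forall fun p => by simp only [EReal.coe_zero, add_zero]; exact le_rfl)
    rw [EReal.coe_zero, add_zero] at h4
    exact h.ge.trans h4
  exact tendsto_of_le_liminf_of_limsup_le h3 le_top

lemma seq_gt {t : ℕ → ℝ} (h : ∀ k, 0 < t k) (ht : Tendsto t atTop (𝓝 0)) :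
    Tendsto t atTop (𝓝[>] 0) :=
  tendsto_nhdsWithin_iff.2 ⟨ht, Eventually.of_forall h⟩

lemma ipV_self_ge (v : Fin n → ℝ) (i : Fin n) : v i ^ 2 ≤ ipV v v := by
  rw [ipV]
  have : v i ^ 2 = v i * v i := sq _
  rw [this]
  exact Finset.single_le_sum (f := fun i => v i * v i) (fun i _ => mul_self_nonneg _)
    (Finset.mem_univ i)

lemma ipV_cont {α : Type*} [TopologicalSpace α] {f g : α → Fin n → ℝ} (hf : Continuous f)
    (hg : Continuous g) : Continuous fun a => ipV (f a) (g a) := by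
  unfold ipV
  fun_prop

lemma good_lower {θ : (Fin n → ℝ) → EReal} (hsym : SymmetricFn θ) {X Y K0 : Sym n}
    (hfin : IsFiniteAt (specFn θ) X)
    {U : Matrix (Fin n) (Fin n) ℝ} (hU : U * Uᵀ = 1) {x y w : Fin n → ℝ}
    (hX : X.val = U * diagonal x * Uᵀ) (hY : Y.val = U * diagonal y * Uᵀ)
    (hK0 : K0.val = U * diagonal w * Uᵀ)
    (hmono : ∀ i j, x i = x j → 0 ≤ (y i - y j) * (w i - w j)) :
    ∃ (v : ℝ × Sym n → Fin n → ℝ) (e : ℝ × Sym n → ℝ),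
      Tendsto v (𝓝[>] 0 ×ˢ 𝓝 K0) (𝓝 w) ∧ Tendsto e (𝓝[>] 0 ×ˢ 𝓝 K0) (𝓝 0) ∧
      ∀ᶠ p in 𝓝[>] 0 ×ˢ 𝓝 K0, sdq2 ipV θ x y p.1 (v p) + ((e p : ℝ) : EReal) ≤
        sdq2 ipM (specFn θ) X Y p.1 p.2 := by
  obtain ⟨a, ha⟩ : ∃ a : ℝ, specFn θ X = a :=
    ⟨(specFn θ X).toReal, (EReal.coe_toReal hfin.1 hfin.2).symm⟩
  have hax : θ x = a := by rw [← specFn_conj hsym X hU hX, ha]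
  obtain ⟨M, t0, ht0, hl⟩ := lower_pt hsym hU hX hY hK0 hmono
  have hl' : ∀ p : ℝ × Sym n, ∃ v : Fin n → ℝ, 0 < p.1 → p.1 < t0 →
      specFn θ (X + p.1 • p.2) = θ (x + p.1 • v) ∧
      ipV (v - w) (v - w) ≤ ipM (p.2 - K0) (p.2 - K0) ∧
      ipM Y p.2 - ipV y v ≤ M * p.1 * (ipM p.2 p.2 - ipV v v) := by
    intro p
    by_cases h : 0 < p.1 ∧ p.1 < t0
    · obtain ⟨v, hv⟩ := hl p.1 h.1 h.2 p.2
      exact ⟨v, fun _ _ => hv⟩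
    · exact ⟨0, fun h1 h2 => absurd ⟨h1, h2⟩ h⟩
  choose v hv using hl'
  have hfst : Tendsto (fun p : ℝ × Sym n => p.1) (𝓝[>] 0 ×ˢ 𝓝 K0) (𝓝[>] 0) := tendsto_fst
  have hsnd : Tendsto (fun p : ℝ × Sym n => p.2) (𝓝[>] (0 : ℝ) ×ˢ 𝓝 K0) (𝓝 K0) := tendsto_snd
  have hev : ∀ᶠ p in 𝓝[>] (0 : ℝ) ×ˢ 𝓝 K0, 0 < p.1 ∧ p.1 < t0 :=
    (hfst.eventually self_mem_nhdsWithin).and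
      ((hfst.mono_right nhdsWithin_le_nhds).eventually (gt_mem_nhds ht0))
  have hvt : Tendsto v (𝓝[>] 0 ×ˢ 𝓝 K0) (𝓝 w) := by
    rw [tendsto_pi_nhds]
    intro i
    have hz : Tendsto (fun p : ℝ × Sym n => Real.sqrt (ipM (p.2 - K0) (p.2 - K0)))
        (𝓝[>] (0 : ℝ) ×ˢ 𝓝 K0) (𝓝 0) := by
      have hc : Continuous fun K : Sym n => Real.sqrt (ipM (K - K0) (K - K0)) :=
        (ipM_cont (continuous_id.sub continuous_const)
          (continuous_id.sub continuous_const)).sqrt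
      have := (hc.tendsto K0).comp hsnd
      have h0 : Real.sqrt (ipM (K0 - K0) (K0 - K0)) = 0 := by simp [ipM]
      rw [h0] at this
      exact this
    rw [tendsto_iff_dist_tendsto_zero]
    refine squeeze_zero' (Eventually.of_forall fun _ => dist_nonneg) ?_ hz
    filter_upwards [hev] with p hp
    obtain ⟨-, h2, -⟩ := hv p hp.1 hp.2
    rw [Real.dist_eq]
    exact Real.abs_le_sqrt ((ipV_self_ge (v p - w) i).trans h2)
  refine ⟨v, fun p => 2 * M * (ipV (v p) (v p) - ipM p.2 p.2), hvt, ?_, ?_⟩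
  · have h1 : Tendsto (fun p => ipV (v p) (v p)) (𝓝[>] 0 ×ˢ 𝓝 K0) (𝓝 (ipV w w)) :=
      ((ipV_cont continuous_id continuous_id).tendsto w).comp hvt
    have h2 : Tendsto (fun p : ℝ × Sym n => ipM p.2 p.2) (𝓝[>] (0 : ℝ) ×ˢ 𝓝 K0)
        (𝓝 (ipM K0 K0)) :=
      ((ipM_cont continuous_id continuous_id).tendsto K0).comp hsnd
    have h3 := (h1.sub h2).const_mul (2 * M)
    rw [ipM_diag hU hK0 hK0, sub_self, mul_zero] at h3
    exact h3
  · filter_upwards [hev] with p hp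
    obtain ⟨h1, -, h3⟩ := hv p hp.1 hp.2
    have hp0 := hp.1
    have hs : 0 < 2 / p.1 ^ 2 := by positivity
    rw [sdq2, sdq2, h1, ha, hax, er_shift hs _ a (p.1 * ipM Y p.2) (p.1 * ipV y (v p))]
    refine add_le_add_right ?_ _
    norm_cast
    have e1 : 2 / p.1 ^ 2 * (p.1 * ipV y (v p) - p.1 * ipM Y p.2)
        = 2 / p.1 * (ipV y (v p) - ipM Y p.2) := by field_simp
    have e2 : 2 * M * (ipV (v p) (v p) - ipM p.2 p.2)
        = 2 / p.1 * (M * p.1 * (ipV (v p) (v p) - ipM p.2 p.2)) := by field_simp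
    rw [e1, e2]
    refine mul_le_mul_of_nonneg_left ?_ (by positivity)
    linarith

lemma emb_sdq {θ : (Fin n → ℝ) → EReal} (hsym : SymmetricFn θ) {X Y : Sym n}
    {U : Matrix (Fin n) (Fin n) ℝ} (hU : U * Uᵀ = 1) {x y : Fin n → ℝ}
    (hX : X.val = U * diagonal x * Uᵀ) (hY : Y.val = U * diagonal y * Uᵀ) (t : ℝ)
    (v : Fin n → ℝ) :
    sdq2 ipM (specFn θ) X Y t (cj U (diagSym v)) = sdq2 ipV θ x y t v := by
  have h1 : specFn θ (X + t • cj U (diagSym v)) = θ (x + t • v) := by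
    refine specFn_conj hsym _ hU ?_
    have : diagonal (x + t • v) = diagonal x + t • diagonal v := by
      ext i j
      by_cases hij : i = j
      · subst hij; simp
      · simp [hij]
    rw [this, Matrix.mul_add, Matrix.add_mul, ← hX]
    change X.val + t • (U * diagonal v * Uᵀ) = _
    rw [Matrix.mul_smul, Matrix.smul_mul]
  rw [sdq2, sdq2, h1, specFn_conj hsym X hU hX, ipM_diag hU hY (cj_val U (diagSym v))]

lemma emb_cont (U : Matrix (Fin n) (Fin n) ℝ) : Continuous fun v => cj U (diagSym v) := by
  refine (cj_cont U).comp ?_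
  refine Continuous.subtype_mk ?_ _
  exact continuous_id.matrix_diagonal

lemma emb_le {θ : (Fin n → ℝ) → EReal} (hsym : SymmetricFn θ) {X Y : Sym n}
    {U : Matrix (Fin n) (Fin n) ℝ} (hU : U * Uᵀ = 1) {x y : Fin n → ℝ}
    (hX : X.val = U * diagonal x * Uᵀ) (hY : Y.val = U * diagonal y * Uᵀ) (w : Fin n → ℝ) :
    subderiv2 ipM (specFn θ) X Y (cj U (diagSym w)) ≤ subderiv2 ipV θ x y w := by
  have hfst : Tendsto (fun p : ℝ × (Fin n → ℝ) => p.1) (𝓝[>] 0 ×ˢ 𝓝 w) (𝓝[>] 0) := tendsto_fst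
  have hsnd : Tendsto (fun p : ℝ × (Fin n → ℝ) => p.2) (𝓝[>] (0 : ℝ) ×ˢ 𝓝 w) (𝓝 w) :=
    tendsto_snd
  have h := liminf_transfer (F := 𝓝[>] (0 : ℝ) ×ˢ 𝓝 w)
    (G := 𝓝[>] (0 : ℝ) ×ˢ 𝓝 (cj U (diagSym w)))
    (f2 := fun p : ℝ × Sym n => sdq2 ipM (specFn θ) X Y p.1 p.2)
    (f1 := fun p : ℝ × (Fin n → ℝ) => sdq2 ipV θ x y p.1 p.2)
    (m := fun p : ℝ × (Fin n → ℝ) => (p.1, cj U (diagSym p.2))) (e := fun _ => 0) (c := 0)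
    (hfst.prodMk (((emb_cont U).tendsto w).comp hsnd)) tendsto_const_nhds
    (Eventually.of_forall fun p => by
      simp only [emb_sdq hsym hU hX hY, EReal.coe_zero, add_zero]; exact le_rfl)
  rw [EReal.coe_zero, add_zero] at h
  exact h

lemma good_eq {θ : (Fin n → ℝ) → EReal} (hsym : SymmetricFn θ) {X Y K0 : Sym n}
    (hfin : IsFiniteAt (specFn θ) X)
    {U : Matrix (Fin n) (Fin n) ℝ} (hU : U * Uᵀ = 1) {x y w : Fin n → ℝ}
    (hX : X.val = U * diagonal x * Uᵀ) (hY : Y.val = U * diagonal y * Uᵀ)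
    (hK0 : K0.val = U * diagonal w * Uᵀ)
    (hmono : ∀ i j, x i = x j → 0 ≤ (y i - y j) * (w i - w j)) :
    subderiv2 ipM (specFn θ) X Y K0 = subderiv2 ipV θ x y w := by
  have hK : K0 = cj U (diagSym w) := Subtype.ext hK0
  apply le_antisymm
  · rw [hK]; exact emb_le hsym hU hX hY w
  · obtain ⟨v, e, hv, he, hle⟩ := good_lower hsym hfin hU hX hY hK0 hmono
    have hfst : Tendsto (fun p : ℝ × Sym n => p.1) (𝓝[>] 0 ×ˢ 𝓝 K0) (𝓝[>] 0) := tendsto_fst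
    have h := liminf_transfer (F := 𝓝[>] (0 : ℝ) ×ˢ 𝓝 K0)
      (G := 𝓝[>] (0 : ℝ) ×ˢ 𝓝 w)
      (f1 := fun p : ℝ × Sym n => sdq2 ipM (specFn θ) X Y p.1 p.2)
      (f2 := fun p : ℝ × (Fin n → ℝ) => sdq2 ipV θ x y p.1 p.2)
      (m := fun p : ℝ × Sym n => (p.1, v p)) (hfst.prodMk hv) he hle
    rw [EReal.coe_zero, add_zero] at h
    exact h

lemma ipV_swap (y w : Fin n → ℝ) (i j : Fin n) :
    ipV y (fun k => w (Equiv.swap i j k)) = ipV y w - (y i - y j) * (w i - w j) := by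
  have h : (fun k => w (Equiv.swap i j k))
      = w + (w j - w i) • (Pi.single i 1 - Pi.single j 1 : Fin n → ℝ) := by
    funext k
    by_cases hij : i = j
    · subst hij; simp
    by_cases h1 : k = i
    · subst h1; simp [hij]
    by_cases h2 : k = j
    · subst h2; simp [h1]
    · simp [Equiv.swap_apply_of_ne_of_ne h1 h2, h1, h2]
  have hs : ∀ i : Fin n, ipV y (Pi.single i 1) = y i := by
    intro i; simp [ipV, Pi.single_apply]
  rw [h, ipV_add_right, ipV_smul_right, ipV_sub_right, hs, hs]
  ring

lemma swap_bad {θ : (Fin n → ℝ) → EReal} (hsym : SymmetricFn θ) {X Y H : Sym n}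
    (hsub : RegSubgrad ipM (specFn θ) X Y)
    {U : Matrix (Fin n) (Fin n) ℝ} (hU : U * Uᵀ = 1) {x y w : Fin n → ℝ}
    (hX : X.val = U * diagonal x * Uᵀ) (hY : Y.val = U * diagonal y * Uᵀ)
    (hH : H.val = U * diagonal w * Uᵀ) {i j : Fin n} (hx : x i = x j)
    (hneg : (y i - y j) * (w i - w j) < 0) :
    subderiv2 ipM (specFn θ) X Y H = ⊤ := by
  have hU2 : Uᵀ * U = 1 := mul_eq_one_comm.1 hU
  set W := U.submatrix id (Equiv.swap i j) with hW
  have hWo : W * Wᵀ = 1 := perm_orth U _ hU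
  set Q := W * Uᵀ with hQd
  have hQ : Q * Qᵀ = 1 := by
    rw [hQd, Matrix.transpose_mul, Matrix.transpose_transpose]
    calc W * Uᵀ * (U * Wᵀ) = W * (Uᵀ * U) * Wᵀ := by simp only [Matrix.mul_assoc]
      _ = 1 := by rw [hU2, Matrix.mul_one, hWo]
  have hQ2 : Qᵀ * Q = 1 := mul_eq_one_comm.1 hQ
  have hcj : ∀ z : Fin n → ℝ, Q * (U * diagonal z * Uᵀ) * Qᵀ
      = U * diagonal (fun k => z (Equiv.swap i j k)) * Uᵀ := by
    intro z
    have h1 := perm_conj U (fun k => z (Equiv.swap i j k)) (Equiv.swap i j)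
    simp only [Equiv.swap_apply_self] at h1
    rw [← h1, hQd, Matrix.transpose_mul, Matrix.transpose_transpose, ← hW]
    calc W * Uᵀ * (U * diagonal z * Uᵀ) * (U * Wᵀ)
        = W * (Uᵀ * U) * diagonal z * (Uᵀ * U) * Wᵀ := by simp only [Matrix.mul_assoc]
      _ = _ := by rw [hU2, Matrix.mul_one, Matrix.mul_one]
  have hQX : Q * X.val = X.val * Q := by
    have h1 : Q * X.val * Qᵀ = X.val := by
      rw [hX, hcj]
      congr 3
      funext k
      by_cases h1 : k = i
      · subst h1; simp [hx]
      by_cases h2 : k = j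
      · subst h2; simp [hx]
      · simp [Equiv.swap_apply_of_ne_of_ne h1 h2]
    calc Q * X.val = Q * X.val * (Qᵀ * Q) := by rw [hQ2, Matrix.mul_one]
      _ = Q * X.val * Qᵀ * Q := by simp only [Matrix.mul_assoc]
      _ = X.val * Q := by rw [h1]
  refine bad_top hsym hsub hQ hQX ?_
  have h1 : (cj Q H).val = U * diagonal (fun k => w (Equiv.swap i j k)) * Uᵀ := by
    rw [cj_val, hH, hcj]
  rw [ipM_diag hU hY hH, ipM_diag hU hY h1, ipV_swap]
  linarith

lemma comm_bad {θ : (Fin n → ℝ) → EReal} (hsym : SymmetricFn θ) {X Y H : Sym n}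
    (hsub : RegSubgrad ipM (specFn θ) X Y) (hYX : Y.val * X.val = X.val * Y.val)
    (hHX : H.val * X.val = X.val * H.val) (hne : Y.val * H.val ≠ H.val * Y.val) :
    subderiv2 ipM (specFn θ) X Y H = ⊤ := by
  set A := Y.val * H.val - H.val * Y.val with hA
  have hAT : Aᵀ = -A := by
    rw [hA, Matrix.transpose_sub, Matrix.transpose_mul, Matrix.transpose_mul, symT, symT,
      neg_sub]
  have hXA : X.val * A = A * X.val := by
    rw [hA, Matrix.mul_sub, Matrix.sub_mul]
    congr 1
    · rw [← Matrix.mul_assoc, ← hYX, Matrix.mul_assoc, ← hHX, Matrix.mul_assoc]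
    · rw [← Matrix.mul_assoc, ← hHX, Matrix.mul_assoc, ← hYX, Matrix.mul_assoc]
  obtain ⟨E, hE, hO⟩ := exp_curve A hAT
  have hpos : 0 < (A * Aᵀ).trace := by
    have h1 : (A * Aᵀ).trace = ∑ i, ∑ j, A i j ^ 2 := by
      simp [Matrix.trace, Matrix.mul_apply, sq]
    rw [h1]
    by_contra hc
    apply hne
    rw [← sub_eq_zero, ← hA]
    have h0 : ∑ i, ∑ j, A i j ^ 2 = 0 := le_antisymm (not_lt.1 hc) (by positivity)
    ext i j
    rw [Finset.sum_eq_zero_iff_of_nonneg (fun i _ => by positivity)] at h0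
    have h1 := h0 i (Finset.mem_univ _)
    rw [Finset.sum_eq_zero_iff_of_nonneg (fun i _ => by positivity)] at h1
    simpa using h1 j (Finset.mem_univ _)
  have hc : Continuous fun q : ℝ × Matrix (Fin n) (Fin n) ℝ =>
      (Y.val * (q.2 * H.val)).trace + (Y.val * (H.val * q.2ᵀ)).trace
        + q.1 * (Y.val * (q.2 * H.val * q.2ᵀ)).trace := by
    fun_prop
  have hid : Tendsto (fun t : ℝ => t) (𝓝[>] 0) (𝓝 0) := tendsto_id.mono_right nhdsWithin_le_nhds
  have h := (hc.tendsto (0, A)).comp (hid.prodMk_nhds hE)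
  have hlim : (Y.val * (A * H.val)).trace + (Y.val * (H.val * Aᵀ)).trace
        + 0 * (Y.val * (A * H.val * Aᵀ)).trace = (A * Aᵀ).trace := by
    have h1 : (Y.val * (A * H.val)).trace = (H.val * Y.val * A).trace := by
      rw [← Matrix.mul_assoc, Matrix.trace_mul_comm, Matrix.mul_assoc]
    have h2 : (A * Aᵀ).trace = - (Y.val * H.val * A).trace + (H.val * Y.val * A).trace := by
      rw [hAT]
      nth_rewrite 1 [hA]
      rw [Matrix.mul_neg, Matrix.sub_mul, Matrix.trace_neg, Matrix.trace_sub]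
      ring
    rw [h1, h2, hAT, Matrix.mul_neg, Matrix.mul_neg, Matrix.trace_neg, ← Matrix.mul_assoc]
    ring
  simp only [hlim] at h
  obtain ⟨t, ht1, ht2⟩ := ((h.eventually (lt_mem_nhds hpos)).and self_mem_nhdsWithin).exists
  have ht : 0 < t := ht2
  simp only [Function.comp] at ht1
  refine bad_top hsym hsub (hO t ht).1 ((hO t ht).2 X.val hXA).symm ?_
  have e2 : ipM Y (cj (1 + t • E t) H) = ipM Y H + t * ((Y.val * (E t * H.val)).trace
      + (Y.val * (H.val * (E t)ᵀ)).trace + t * (Y.val * (E t * H.val * (E t)ᵀ)).trace) := by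
    rw [ipM, cj_val, ipM]
    rw [Matrix.transpose_add, Matrix.transpose_one, Matrix.transpose_smul]
    simp only [Matrix.add_mul, Matrix.mul_add, Matrix.one_mul, Matrix.mul_one, Matrix.smul_mul,
      Matrix.mul_smul, Matrix.trace_add, Matrix.trace_smul, smul_eq_mul]
    ring
  rw [e2]
  nlinarith

lemma conj_comm {U : Matrix (Fin n) (Fin n) ℝ} (hU : U * Uᵀ = 1) {x : Fin n → ℝ}
    {X H : Matrix (Fin n) (Fin n) ℝ}
    (hX : X = U * diagonal x * Uᵀ) (h : X * H = H * X) (i j : Fin n) (hij : x i ≠ x j) :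
    (Uᵀ * H * U) i j = 0 := by
  have hU2 : Uᵀ * U = 1 := mul_eq_one_comm.1 hU
  have h1 : diagonal x * (Uᵀ * H * U) = (Uᵀ * H * U) * diagonal x := by
    have e1 : Uᵀ * (X * H) * U = diagonal x * (Uᵀ * H * U) := by
      rw [hX]
      calc Uᵀ * (U * diagonal x * Uᵀ * H) * U = (Uᵀ * U) * diagonal x * (Uᵀ * H * U) := by
            simp only [Matrix.mul_assoc]
        _ = _ := by rw [hU2, Matrix.one_mul]
    have e2 : Uᵀ * (H * X) * U = (Uᵀ * H * U) * diagonal x := by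
      rw [hX]
      calc Uᵀ * (H * (U * diagonal x * Uᵀ)) * U = Uᵀ * H * U * diagonal x * (Uᵀ * U) := by
            simp only [Matrix.mul_assoc]
        _ = _ := by rw [hU2, Matrix.mul_one]
    rw [← e1, h, e2]
  have h2 := congrFun (congrFun h1 i) j
  rw [Matrix.diagonal_mul, Matrix.mul_diagonal] at h2
  have h3 : (x i - x j) * (Uᵀ * H * U) i j = 0 := by linarith
  exact (mul_eq_zero.1 h3).resolve_left (sub_ne_zero.2 hij)

lemma block_comm {V : Matrix (Fin n) (Fin n) ℝ} (hV : V * Vᵀ = 1) {x : Fin n → ℝ}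
    (h : ∀ i j, x i ≠ x j → V i j = 0) : V * diagonal x * Vᵀ = diagonal x := by
  have h1 : V * diagonal x = diagonal x * V := by
    ext i j
    rw [Matrix.diagonal_mul, Matrix.mul_diagonal]
    by_cases hij : x i = x j
    · rw [hij, mul_comm]
    · rw [h i j hij]; ring
  rw [h1, Matrix.mul_assoc, hV, Matrix.mul_one]

lemma sim_diag {X Y H : Sym n} {U : Matrix (Fin n) (Fin n) ℝ} (hU : U * Uᵀ = 1)
    {x y : Fin n → ℝ}
    (hX : X.val = U * diagonal x * Uᵀ) (hY : Y.val = U * diagonal y * Uᵀ)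
    (hHX : X.val * H.val = H.val * X.val) (hHY : Y.val * H.val = H.val * Y.val) :
    ∃ (U' : Matrix (Fin n) (Fin n) ℝ) (w : Fin n → ℝ), U' * U'ᵀ = 1 ∧
      X.val = U' * diagonal x * U'ᵀ ∧ Y.val = U' * diagonal y * U'ᵀ ∧
      H.val = U' * diagonal w * U'ᵀ := by
  classical
  let c : Fin n → Set.range (fun i => (x i, y i)) := fun i => ⟨(x i, y i), i, rfl⟩
  have hc : ∀ i j, c i ≠ c j ↔ ¬ (x i = x j ∧ y i = y j) := by
    intro i j
    rw [Ne, Subtype.ext_iff]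
    simp only [c, Prod.mk.injEq]
  obtain ⟨V, w, hV, hS, hV0⟩ := block_diag_spectral c (Uᵀ * H.val * U) (by
    rw [Matrix.transpose_mul, Matrix.transpose_mul, symT, Matrix.transpose_transpose,
      Matrix.mul_assoc]) (by
    intro i j hij
    rw [hc] at hij
    by_cases h : x i = x j
    · exact conj_comm hU hY hHY i j (fun h2 => hij ⟨h, h2⟩)
    · exact conj_comm hU hX hHX i j h)
  have hass : ∀ D : Matrix (Fin n) (Fin n) ℝ, U * V * D * (U * V)ᵀ = U * (V * D * Vᵀ) * Uᵀ := by
    intro D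
    rw [Matrix.transpose_mul]; simp only [Matrix.mul_assoc]
  refine ⟨U * V, w, ?_, ?_, ?_, ?_⟩
  · have := hass 1
    rwa [Matrix.mul_one, Matrix.mul_one, hV, Matrix.mul_one, hU] at this
  · rw [hass, block_comm hV, hX]
    intro i j hij
    exact hV0 i j ((hc i j).2 fun h => hij h.1)
  · rw [hass, block_comm hV, hY]
    intro i j hij
    exact hV0 i j ((hc i j).2 fun h => hij h.2)
  · rw [hass, ← hS]
    calc H.val = (U * Uᵀ) * H.val * (U * Uᵀ) := by rw [hU, Matrix.one_mul, Matrix.mul_one]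
      _ = _ := by simp only [Matrix.mul_assoc]

lemma decomp {X : Sym n} (H : Sym n) {U : Matrix (Fin n) (Fin n) ℝ} (hU : U * Uᵀ = 1)
    {x : Fin n → ℝ} (hX : X.val = U * diagonal x * Uᵀ) :
    ∃ (H0 : Sym n) (A : Matrix (Fin n) (Fin n) ℝ), Aᵀ = -A ∧
      H0.val * X.val = X.val * H0.val ∧ H.val = H0.val + (A * X.val - X.val * A) := by
  classical
  have hU2 : Uᵀ * U = 1 := mul_eq_one_comm.1 hU
  set P := Uᵀ * H.val * U with hP
  have hPT : Pᵀ = P := by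
    rw [hP, Matrix.transpose_mul, Matrix.transpose_mul, symT, Matrix.transpose_transpose,
      Matrix.mul_assoc]
  have hPs : ∀ i j, P j i = P i j := fun i j => congrFun (congrFun hPT i) j
  let S : Matrix (Fin n) (Fin n) ℝ := Matrix.of fun i j => if x i = x j then P i j else 0
  let B : Matrix (Fin n) (Fin n) ℝ :=
    Matrix.of fun i j => if x i = x j then 0 else P i j / (x j - x i)
  have hST : Sᵀ = S := by
    ext i j
    simp only [S, Matrix.transpose_apply, Matrix.of_apply, hPs i j, eq_comm]
  have hBT : Bᵀ = -B := by
    ext i j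
    simp only [B, Matrix.transpose_apply, Matrix.of_apply, Matrix.neg_apply, hPs i j]
    by_cases h : x i = x j
    · simp [h]
    · rw [if_neg (Ne.symm h), if_neg h, ← neg_sub (x j) (x i), div_neg]
  have hSx : S * diagonal x = diagonal x * S := by
    ext i j
    rw [Matrix.diagonal_mul, Matrix.mul_diagonal]
    by_cases h : x i = x j
    · rw [h, mul_comm]
    · simp [S, h]
  have hdec : P = S + (B * diagonal x - diagonal x * B) := by
    ext i j
    rw [Matrix.add_apply, Matrix.sub_apply, Matrix.diagonal_mul, Matrix.mul_diagonal]
    by_cases h : x i = x j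
    · simp [S, B, h]
    · have : x j - x i ≠ 0 := sub_ne_zero.2 (Ne.symm h)
      simp only [S, B, Matrix.of_apply, if_neg h]
      field_simp
      ring
  have hm : ∀ C D : Matrix (Fin n) (Fin n) ℝ, (U * C * Uᵀ) * (U * D * Uᵀ) = U * (C * D) * Uᵀ := by
    intro C D
    calc (U * C * Uᵀ) * (U * D * Uᵀ) = U * C * (Uᵀ * U) * D * Uᵀ := by
          simp only [Matrix.mul_assoc]
      _ = _ := by rw [hU2, Matrix.mul_one, Matrix.mul_assoc U]
  refine ⟨cj U ⟨S, hST⟩, U * B * Uᵀ, ?_, ?_, ?_⟩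
  · rw [Matrix.transpose_mul, Matrix.transpose_mul, Matrix.transpose_transpose, hBT,
      Matrix.neg_mul, Matrix.mul_neg, Matrix.mul_assoc]
  · rw [cj_val, hX, hm, hm, hSx]
  · rw [cj_val, hX, hm, hm, ← Matrix.sub_mul, ← Matrix.mul_sub, ← Matrix.add_mul,
      ← Matrix.mul_add, ← hdec, hP]
    calc H.val = (U * Uᵀ) * H.val * (U * Uᵀ) := by rw [hU, Matrix.one_mul, Matrix.mul_one]
      _ = _ := by simp only [Matrix.mul_assoc]

lemma diag_comm {X Y : Sym n} {U : Matrix (Fin n) (Fin n) ℝ} (hU : U * Uᵀ = 1)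
    {x y : Fin n → ℝ}
    (hX : X.val = U * diagonal x * Uᵀ) (hY : Y.val = U * diagonal y * Uᵀ) :
    Y.val * X.val = X.val * Y.val := by
  have hU2 : Uᵀ * U = 1 := mul_eq_one_comm.1 hU
  have hm : ∀ C D : Matrix (Fin n) (Fin n) ℝ, (U * C * Uᵀ) * (U * D * Uᵀ) = U * (C * D) * Uᵀ := by
    intro C D
    calc (U * C * Uᵀ) * (U * D * Uᵀ) = U * C * (Uᵀ * U) * D * Uᵀ := by
          simp only [Matrix.mul_assoc]
      _ = _ := by rw [hU2, Matrix.mul_one, Matrix.mul_assoc U]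
  rw [hX, hY, hm, hm, Matrix.diagonal_mul_diagonal, Matrix.diagonal_mul_diagonal]
  simp only [mul_comm]

lemma ted_of_theta {θ : (Fin n → ℝ) → EReal} (hsym : SymmetricFn θ) {X Y : Sym n}
    (hsub : RegSubgrad ipM (specFn θ) X Y)
    {U : Matrix (Fin n) (Fin n) ℝ} (hU : U * Uᵀ = 1) {x y : Fin n → ℝ}
    (hX : X.val = U * diagonal x * Uᵀ) (hY : Y.val = U * diagonal y * Uᵀ)
    (h : TwiceEpiDiff ipV θ x y) : TwiceEpiDiff ipM (specFn θ) X Y := by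
  refine ⟨hsub.1, fun t ht0 ht H => ?_⟩
  have htg := seq_gt ht0 ht
  obtain ⟨H0, A, hA, hHX, hH⟩ := decomp H hU hX
  have hYX := diag_comm hU hX hY
  obtain ⟨c, Φ, e, hd, hΦ, he, hs⟩ := transport hsym hsub.1 hYX hA hH
  have htop : subderiv2 ipM (specFn θ) X Y H0 = ⊤ → ∃ ws : ℕ → Sym n, Tendsto ws atTop (𝓝 H) ∧
      Tendsto (fun k => sdq2 ipM (specFn θ) X Y (t k) (ws k)) atTop
        (𝓝 (subderiv2 ipM (specFn θ) X Y H)) := by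
    intro h0
    have h1 : subderiv2 ipM (specFn θ) X Y H = ⊤ := by rw [hd, h0, EReal.top_add_coe]
    refine ⟨fun _ => H, tendsto_const_nhds, ?_⟩
    rw [h1]
    exact top_seq h1 htg
  by_cases hc : Y.val * H0.val = H0.val * Y.val
  · obtain ⟨U', w, hU', hX', hY', hH0'⟩ := sim_diag hU hX hY hHX.symm hc
    by_cases hmono : ∀ i j, x i = x j → 0 ≤ (y i - y j) * (w i - w j)
    · have heq := good_eq hsym hsub.1 hU' hX' hY' hH0' hmono
      obtain ⟨ws, hws, hlim⟩ := h.2 t ht0 ht w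
      have hK : H0 = cj U' (diagSym w) := Subtype.ext hH0'
      have hemb : Tendsto (fun k => cj U' (diagSym (ws k))) atTop (𝓝 H0) := by
        rw [hK]; exact ((emb_cont U').tendsto w).comp hws
      have hpair := htg.prodMk hemb
      refine ⟨fun k => Φ (t k, cj U' (diagSym (ws k))), hΦ.comp hpair, ?_⟩
      simp only [hs _ _ (ht0 _), emb_sdq hsym hU' hX' hY']
      rw [hd, heq]
      exact tendsto_add_coe hlim (he.comp hpair)
    · push Not at hmono
      obtain ⟨i, j, hx, hneg⟩ := hmono
      exact htop (swap_bad hsym hsub hU' hX' hY' hH0' hx hneg)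
  · exact htop (comm_bad hsym hsub hYX hHX hc)

lemma theta_of_ted {θ : (Fin n → ℝ) → EReal} (hsym : SymmetricFn θ) {X Y : Sym n}
    (hsub : RegSubgrad ipM (specFn θ) X Y)
    {U : Matrix (Fin n) (Fin n) ℝ} (hU : U * Uᵀ = 1) {x y : Fin n → ℝ}
    (hX : X.val = U * diagonal x * Uᵀ) (hY : Y.val = U * diagonal y * Uᵀ)
    (h : TwiceEpiDiff ipM (specFn θ) X Y) : TwiceEpiDiff ipV θ x y := by
  have hfin : IsFiniteAt θ x := by
    have := hsub.1
    rw [IsFiniteAt, specFn_conj hsym X hU hX] at this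
    exact this
  refine ⟨hfin, fun t ht0 ht w => ?_⟩
  have htg := seq_gt ht0 ht
  have hH0 : (cj U (diagSym w)).val = U * diagonal w * Uᵀ := rfl
  by_cases hmono : ∀ i j, x i = x j → 0 ≤ (y i - y j) * (w i - w j)
  · have heq := good_eq hsym hsub.1 hU hX hY hH0 hmono
    obtain ⟨v, e, hv, he, hle⟩ := good_lower hsym hsub.1 hU hX hY hH0 hmono
    obtain ⟨Hs, hHs, hlim⟩ := h.2 t ht0 ht (cj U (diagSym w))
    have hpair := htg.prodMk hHs
    have hvk := hv.comp hpair
    have hek := he.comp hpair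
    rw [heq] at hlim
    refine ⟨fun k => v (t k, Hs k), hvk, ?_⟩
    refine tendsto_of_le_liminf_of_limsup_le ?_ ?_
    · have h1 := liminf_transfer (F := (atTop : Filter ℕ))
        (G := 𝓝[>] (0 : ℝ) ×ˢ 𝓝 w)
        (f1 := fun k => sdq2 ipV θ x y (t k) (v (t k, Hs k)))
        (f2 := fun p : ℝ × (Fin n → ℝ) => sdq2 ipV θ x y p.1 p.2)
        (m := fun k => (t k, v (t k, Hs k))) (e := fun _ => 0) (c := 0)
        (htg.prodMk hvk) tendsto_const_nhds
        (Eventually.of_forall fun p => by simp only [EReal.coe_zero, add_zero]; exact le_rfl)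
      rw [EReal.coe_zero, add_zero] at h1
      exact h1
    · have h2 := tendsto_add_coe hlim hek.neg
      rw [neg_zero, EReal.coe_zero, add_zero] at h2
      rw [← h2.limsup_eq]
      refine limsup_le_limsup ?_
      filter_upwards [hpair.eventually hle] with k hk
      have h3 := add_le_add_left hk ((-(e (t k, Hs k)) : ℝ) : EReal)
      rw [add_assoc, ← EReal.coe_add, add_neg_cancel, EReal.coe_zero, add_zero] at h3
      exact h3
  · push Not at hmono
    obtain ⟨i, j, hx, hneg⟩ := hmono
    have h1 := swap_bad hsym hsub hU hX hY hH0 hx hneg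
    have h2 : subderiv2 ipV θ x y w = ⊤ :=
      top_le_iff.1 (h1 ▸ emb_le hsym hU hX hY w)
    refine ⟨fun _ => w, tendsto_const_nhds, ?_⟩
    rw [h2]
    exact top_seq h2 htg

end Main

/-- Theorem 3.5, equivalence: `g = θ ∘ λ` is twice epi-differentiable at `X`
for `Y` if and only if `θ` is twice epi-differentiable at `λ(X)` for `y`. -/
theorem twice_epi_diff_spectral {n : ℕ} (θ : (Fin n → ℝ) → EReal)
    (X Y : Sym n) (U : Matrix (Fin n) (Fin n) ℝ) (y : Fin n → ℝ)
    (hsym : SymmetricFn θ) (hLip : LocLipRelDom ipV θ)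
    (hlsc : LowerSemicontinuous (specFn θ))
    (hY : RegSubgrad ipM (specFn θ) X Y)
    (hy : RegSubgrad ipV θ (eigval X.val) y)
    (hU : U ∈ eigOrth X.val)
    (hYdec : Y.val = U * Matrix.diagonal y * Uᵀ) :
    TwiceEpiDiff ipM (specFn θ) X Y ↔ TwiceEpiDiff ipV θ (eigval X.val) y := by
  exact ⟨theta_of_ted hsym hY hU.1 hU.2 hYdec, ted_of_theta hsym hY hU.1 hU.2 hYdec⟩

end SpecPaper
end
end
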